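/- arXiv:math/0406264 — 9 statements merged into one kernel-verified Lean document; each statement's English description precedes it below -/
import Mathlib

section
/- For each n ≥ 271 there exists a strictly convex norm N on ℝ^n and a finite set S ⊆ ℝ^n with card S ≥ 1.058^n such that S is equilateral with respect to N; that is, there is a function N : ℝ^n → ℝ satisfying N(x) ≥ 0 with N(x) = 0 iff x = 0, N(a•x) = |a|·N(x), N(x + y) ≤ N(x) + N(y), and moreover N(x + y) < N(x) + N(y) whenever x and y are linearly independent, together with λ > 0 such that N(x − y) = λ for all distinct x, y ∈ S. -/
/-!
A finite family is acute if all angles it spans are acute. Doubling an acute family costs two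
dimensions: replace `x i` by the pair `(x i, ± ε u i)`, where the `± u i` are distinct points of
the unit circle and `ε` is small, so `⌊n / 2⌋` doublings give `2 ^ ⌊n / 2⌋` points in dimension `n`.
If `x` is acute and `w = x i - x j`, then among all differences of members of `x` the functional
`⟪w, ·⟫` attains its maximum and minimum only at `w` and `-w`. Hence `w` lies on the boundary of an
ellipsoid containing all the differences: perturb the form `⟪w, z⟫ ^ 2 / ‖w‖ ^ 4` defining the slab
between `w` and `-w` by a tiny multiple of `‖z‖ ^ 2`, keeping its value at `w`. The intersection of
these ellipsoids is the unit ball of a strictly convex norm in which all differences have length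
one.
-/

open Filter Function Set
open scoped InnerProductSpace Topology

section StrictlyConvexNorm

variable {V W : Type*} [AddCommGroup V] [Module ℝ V] [AddCommGroup W] [Module ℝ W]

/-- The seminorm `N` is a strictly convex norm. This is a predicate on seminorms because
`StrictConvexSpace` would need `N` as a norm instance, competing with the Euclidean norm from which
`N` is built. -/
structure IsStrictlyConvexNorm (N : Seminorm ℝ V) : Prop where
  eq_zero_of_map_eq_zero : ∀ {x}, N x = 0 → x = 0
  map_add_lt : ∀ {x y}, LinearIndependent ℝ ![x, y] → N (x + y) < N x + N y

theorem isStrictlyConvexNorm_normSeminorm (E : Type*) [NormedAddCommGroup E] [NormedSpace ℝ E]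
    [StrictConvexSpace ℝ E] : IsStrictlyConvexNorm (normSeminorm ℝ E) where
  eq_zero_of_map_eq_zero h := norm_eq_zero.1 h
  map_add_lt hxy := not_sameRay_iff_norm_add_lt.1 fun h =>
    sameRay_or_sameRay_neg_iff_not_linearIndependent.1 (.inl h) hxy

namespace IsStrictlyConvexNorm

theorem comp {N : Seminorm ℝ W} (hN : IsStrictlyConvexNorm N) {f : V →ₗ[ℝ] W} (hf : Injective f) :
    IsStrictlyConvexNorm (N.comp f) where
  eq_zero_of_map_eq_zero h := (map_eq_zero_iff f hf).1 (hN.eq_zero_of_map_eq_zero h)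
  map_add_lt {x y} hxy := by
    have hfxy : LinearIndependent ℝ ![f x, f y] := by
      have hvec : f ∘ ![x, y] = ![f x, f y] := (FinVec.map_eq f ![x, y]).symm
      rw [← hvec]
      exact hxy.map' f (LinearMap.ker_eq_bot.2 hf)
    simpa only [Seminorm.comp_apply, map_add] using hN.map_add_lt hfxy

theorem finset_sup {ι : Type*} {N : ι → Seminorm ℝ V} {s : Finset ι} (hs : s.Nonempty)
    (hN : ∀ i ∈ s, IsStrictlyConvexNorm (N i)) : IsStrictlyConvexNorm (s.sup N) where
  eq_zero_of_map_eq_zero {x} h := by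
    obtain ⟨i, hi, hx⟩ := Seminorm.exists_apply_eq_finset_sup N hs x
    exact (hN i hi).eq_zero_of_map_eq_zero (hx.symm.trans h)
  map_add_lt {x y} hxy := by
    obtain ⟨i, hi, hsup⟩ := Seminorm.exists_apply_eq_finset_sup N hs (x + y)
    calc s.sup N (x + y) = N i (x + y) := hsup
      _ < N i x + N i y := (hN i hi).map_add_lt hxy
      _ ≤ s.sup N x + s.sup N y :=
        add_le_add (Seminorm.le_finset_sup_apply hi) (Seminorm.le_finset_sup_apply hi)

end IsStrictlyConvexNorm

end StrictlyConvexNorm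

section ExposedPoints

variable {V : Type*} [NormedAddCommGroup V] [InnerProductSpace ℝ V]

/-- The seminorm `z ↦ √(a² g(z)² + b² ‖z‖²)`, whose unit ball is an ellipsoid for `b ≠ 0`, encoded
as the pullback of the Euclidean norm along `z ↦ (a g(z), b z)`. -/
noncomputable def ellipsoidSeminorm (g : Module.Dual ℝ V) (a b : ℝ) : Seminorm ℝ V :=
  (normSeminorm ℝ (WithLp 2 (ℝ × V))).comp
    ((WithLp.linearEquiv 2 ℝ (ℝ × V)).symm ∘ₗ (a • g).prod (b • LinearMap.id))

theorem ellipsoidSeminorm_sq (g : Module.Dual ℝ V) (a b : ℝ) (z : V) :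
    ellipsoidSeminorm g a b z ^ 2 = a ^ 2 * g z ^ 2 + b ^ 2 * ‖z‖ ^ 2 := by
  simp [ellipsoidSeminorm, WithLp.prod_norm_sq_eq_of_L2, norm_smul, mul_pow]

theorem isStrictlyConvexNorm_ellipsoidSeminorm (g : Module.Dual ℝ V) (a : ℝ) {b : ℝ} (hb : b ≠ 0) :
    IsStrictlyConvexNorm (ellipsoidSeminorm g a b) :=
  (isStrictlyConvexNorm_normSeminorm _).comp <|
    (WithLp.linearEquiv 2 ℝ (ℝ × V)).symm.injective.comp fun x y h => by
      simpa [hb] using congrArg Prod.snd h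

theorem exists_isStrictlyConvexNorm_eq_one_le_one {D : Set V} (hD : D.Finite) {w : V}
    {g : Module.Dual ℝ V} (hgw : g w = 1) (hg : ∀ z ∈ D, z ≠ w → z ≠ -w → |g z| < 1) :
    ∃ N : Seminorm ℝ V, IsStrictlyConvexNorm N ∧ N w = 1 ∧ ∀ z ∈ D, N z ≤ 1 := by
  have eventually_lt (c d : ℝ) (hc : c < 1) : ∀ᶠ b in 𝓝[>] (0 : ℝ), c + b ^ 2 * d < 1 :=
    nhdsWithin_le_nhds <| (show Continuous fun b : ℝ => c + b ^ 2 * d by fun_prop).tendsto 0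
      |>.eventually_lt_const (by simpa using hc)
  have hD_small : ∀ᶠ b in 𝓝[>] (0 : ℝ), ∀ z ∈ D, z ≠ w → z ≠ -w →
      g z ^ 2 + b ^ 2 * ‖z‖ ^ 2 < 1 := by
    refine (eventually_all_finite hD).2 fun z hz => ?_
    simp only [eventually_imp_distrib_left]
    exact fun hzw hzw' => eventually_lt _ _ ((sq_lt_one_iff_abs_lt_one _).2 (hg z hz hzw hzw'))
  obtain ⟨b, hb, hbw, hbD⟩ :=
    (eventually_mem_nhdsWithin.and
      ((eventually_lt 0 (‖w‖ ^ 2) one_pos).and hD_small)).exists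
  have ha : √(1 - b ^ 2 * ‖w‖ ^ 2) ^ 2 = 1 - b ^ 2 * ‖w‖ ^ 2 := Real.sq_sqrt (by linarith)
  set N := ellipsoidSeminorm g √(1 - b ^ 2 * ‖w‖ ^ 2) b
  have hNw : N w = 1 := by
    rw [← pow_eq_one_iff_of_nonneg (apply_nonneg N w) two_ne_zero, ellipsoidSeminorm_sq, ha, hgw]
    ring
  refine ⟨N, isStrictlyConvexNorm_ellipsoidSeminorm g _ (ne_of_gt hb), hNw, fun z hz => ?_⟩
  by_cases hzw : z = w
  · rw [hzw, hNw]
  by_cases hzw' : z = -w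
  · rw [hzw', map_neg_eq_map, hNw]
  rw [← sq_le_one_iff₀ (apply_nonneg N z), ellipsoidSeminorm_sq, ha]
  calc (1 - b ^ 2 * ‖w‖ ^ 2) * g z ^ 2 + b ^ 2 * ‖z‖ ^ 2
      ≤ g z ^ 2 + b ^ 2 * ‖z‖ ^ 2 := by
        gcongr
        exact mul_le_of_le_one_left (sq_nonneg _) (sub_le_self 1 (by positivity))
    _ ≤ 1 := (hbD z hz hzw hzw').le

theorem exists_isStrictlyConvexNorm_forall_eq_one {D : Set V} (hD : D.Finite)
    (hexp : ∀ w ∈ D, ∃ g : Module.Dual ℝ V, g w = 1 ∧ ∀ z ∈ D, z ≠ w → z ≠ -w → |g z| < 1) :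
    ∃ N : Seminorm ℝ V, IsStrictlyConvexNorm N ∧ ∀ w ∈ D, N w = 1 := by
  have hsupp (w : D) : ∃ N : Seminorm ℝ V,
      IsStrictlyConvexNorm N ∧ N w = 1 ∧ ∀ z ∈ D, N z ≤ 1 := by
    obtain ⟨g, hgw, hg⟩ := hexp w w.2
    exact exists_isStrictlyConvexNorm_eq_one_le_one hD hgw hg
  choose N hN hNw hND using hsupp
  rcases isEmpty_or_nonempty D with hempty | hne
  · exact ⟨normSeminorm ℝ V, isStrictlyConvexNorm_normSeminorm V, fun w hw => hempty.elim ⟨w, hw⟩⟩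
  have := hD.fintype
  refine ⟨Finset.univ.sup N, .finset_sup Finset.univ_nonempty fun w _ => hN w, fun w hw => ?_⟩
  apply le_antisymm
  · exact Seminorm.finset_sup_apply_le zero_le_one fun v _ => hND v w hw
  · exact (hNw ⟨w, hw⟩).ge.trans (Seminorm.le_finset_sup_apply (Finset.mem_univ _))

end ExposedPoints

section Acute

variable {V P : Type*} [NormedAddCommGroup V] [InnerProductSpace ℝ V]
  [NormedAddCommGroup P] [InnerProductSpace ℝ P] {ι κ : Type*}

/-- All angles determined by three members of the family `x` are acute. The case `j = k` is
included, so that the members of an acute family are distinct. -/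
def IsAcute (x : ι → V) : Prop :=
  ∀ ⦃i j k⦄, j ≠ i → k ≠ i → 0 < ⟪x j - x i, x k - x i⟫_ℝ

theorem isAcute_of_subsingleton [Subsingleton ι] (x : ι → V) : IsAcute x :=
  fun _ _ _ hj => absurd (Subsingleton.elim _ _) hj

namespace IsAcute

variable {x : ι → V}

theorem injective (hx : IsAcute x) : Injective x := by
  intro i j hij
  by_contra hne
  simpa [hij] using hx hne hne

theorem comp_injective (hx : IsAcute x) {f : κ → ι} (hf : Injective f) : IsAcute (x ∘ f) :=
  fun _ _ _ hj hk => hx (hf.ne hj) (hf.ne hk)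

theorem map (hx : IsAcute x) (f : V →ₗᵢ[ℝ] P) : IsAcute (f ∘ x) := fun i j k hj hk => by
  simpa only [comp_apply, ← map_sub, f.inner_map_map] using hx hj hk

theorem inner_sub_lt (hx : IsAcute x) {i j k l : ι} (hij : i ≠ j) (hkl : (k, l) ≠ (i, j)) :
    ⟪x i - x j, x k - x l⟫_ℝ < ⟪x i - x j, x i - x j⟫_ℝ := by
  have max_at_i (hk : k ≠ i) : ⟪x i - x j, x k⟫_ℝ < ⟪x i - x j, x i⟫_ℝ := by
    have h := hx hij.symm hk
    rw [← neg_sub (x i) (x j), inner_neg_left, inner_sub_right] at h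
    linarith
  have min_at_j (hl : l ≠ j) : ⟪x i - x j, x j⟫_ℝ < ⟪x i - x j, x l⟫_ℝ := by
    have h := hx hij hl
    rwa [inner_sub_right, sub_pos] at h
  rw [inner_sub_right, inner_sub_right]
  by_cases hk : k = i
  · subst hk
    exact sub_lt_sub_left (min_at_j fun hl => hkl (by rw [hl])) _
  · have hjl : ⟪x i - x j, x j⟫_ℝ ≤ ⟪x i - x j, x l⟫_ℝ := by
      by_cases hl : l = j
      · rw [hl]
      · exact (min_at_j hl).le
    exact (sub_lt_sub_right (max_at_i hk) _).trans_le (sub_le_sub_left hjl _)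

theorem abs_inner_sub_lt (hx : IsAcute x) {i j k l : ι} (hij : i ≠ j)
    (hkl : x k - x l ≠ x i - x j) (hlk : x k - x l ≠ -(x i - x j)) :
    |⟪x i - x j, x k - x l⟫_ℝ| < ⟪x i - x j, x i - x j⟫_ℝ := by
  refine max_lt (hx.inner_sub_lt hij ?_) ?_
  · rintro ⟨⟩
    exact hkl rfl
  · rw [← inner_neg_right, neg_sub]
    refine hx.inner_sub_lt hij ?_
    rintro ⟨⟩
    exact hlk (neg_sub _ _).symm

theorem exists_isStrictlyConvexNorm_sub_eq_one [Finite ι] (hx : IsAcute x) :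
    ∃ N : Seminorm ℝ V, IsStrictlyConvexNorm N ∧ ∀ i j, i ≠ j → N (x i - x j) = 1 := by
  let D : Set V := (fun p : ι × ι => x p.1 - x p.2) '' {p | p.1 ≠ p.2}
  suffices ∃ N : Seminorm ℝ V, IsStrictlyConvexNorm N ∧ ∀ w ∈ D, N w = 1 by
    obtain ⟨N, hN, hND⟩ := this
    exact ⟨N, hN, fun i j hij => hND _ ⟨(i, j), hij, rfl⟩⟩
  apply exists_isStrictlyConvexNorm_forall_eq_one (toFinite D)
  rintro _ ⟨⟨i, j⟩, hij, rfl⟩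
  set w := x i - x j
  have hw : 0 < ⟪w, w⟫_ℝ := hx hij hij
  refine ⟨(⟪w, w⟫_ℝ)⁻¹ • innerₗ V w, inv_mul_cancel₀ hw.ne', ?_⟩
  rintro _ ⟨⟨k, l⟩, -, rfl⟩ hkl hlk
  calc |(⟪w, w⟫_ℝ)⁻¹ * ⟪w, x k - x l⟫_ℝ| = |⟪w, x k - x l⟫_ℝ| / ⟪w, w⟫_ℝ := by
        rw [inv_mul_eq_div, abs_div, abs_of_pos hw]
    _ < 1 := (div_lt_one hw).2 (hx.abs_inner_sub_lt hij hkl hlk)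

theorem eventually_prod [Finite κ] (hx : IsAcute x) {q : κ → ι} {v : κ → P}
    (hv : ∀ a b c, b ≠ a → c ≠ a → q b = q a → 0 < ⟪v b - v a, v c - v a⟫_ℝ) :
    ∀ᶠ ε in 𝓝[>] (0 : ℝ), IsAcute fun a => WithLp.toLp 2 (x (q a), ε • v a) := by
  have inner_eq (ε : ℝ) (a b c : κ) :
      ⟪WithLp.toLp 2 (x (q b), ε • v b) - WithLp.toLp 2 (x (q a), ε • v a),
        WithLp.toLp 2 (x (q c), ε • v c) - WithLp.toLp 2 (x (q a), ε • v a)⟫_ℝ =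
      ⟪x (q b) - x (q a), x (q c) - x (q a)⟫_ℝ + ε ^ 2 * ⟪v b - v a, v c - v a⟫_ℝ := by
    simp only [WithLp.prod_inner_apply, WithLp.ofLp_sub, Prod.mk_sub_mk, ← smul_sub,
      inner_smul_right, inner_smul_left, Real.ringHom_apply]
    ring
  simp only [IsAcute, eventually_all, inner_eq]
  intro a b c hb hc
  by_cases hqb : q b = q a
  · filter_upwards [self_mem_nhdsWithin] with ε hε
    simpa [hqb] using mul_pos (pow_pos hε 2) (hv a b c hb hc hqb)
  by_cases hqc : q c = q a
  · filter_upwards [self_mem_nhdsWithin] with ε hε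
    simpa [hqc, real_inner_comm] using mul_pos (pow_pos hε 2) (hv a c b hc hb hqc)
  have h0 : 0 < ⟪x (q b) - x (q a), x (q c) - x (q a)⟫_ℝ + 0 ^ 2 * ⟪v b - v a, v c - v a⟫_ℝ := by
    simpa using hx hqb hqc
  exact nhdsWithin_le_nhds <| (Continuous.tendsto (by fun_prop) 0).eventually_const_lt h0

end IsAcute

theorem exists_antipodal_family_unit_circle (ι : Type*) [Countable ι] :
    ∃ v : ι × Bool → ℂ, Injective v ∧ (∀ a, ‖v a‖ = 1) ∧
      ∀ a b, b.1 = a.1 → b ≠ a → v b = -v a := by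
  obtain ⟨f, hf⟩ := exists_injective_nat ι
  let u (i : ι) : ℂ := Complex.exp (Real.arctan (f i) * Complex.I)
  have norm_u (i : ι) : ‖u i‖ = 1 := Complex.norm_exp_ofReal_mul_I _
  have slope_u (i : ι) : (u i).im / (u i).re = f i := by
    rw [Complex.exp_ofReal_mul_I_re, Complex.exp_ofReal_mul_I_im, ← Real.tan_eq_sin_div_cos,
      Real.tan_arctan]
  -- The slope `im / re` does not see the sign, so it recovers `i` from `v (i, s)`.
  let v (a : ι × Bool) : ℂ := bif a.2 then u a.1 else -u a.1
  have slope_v (a : ι × Bool) : (v a).im / (v a).re = f a.1 := by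
    rcases a with ⟨i, _ | _⟩ <;> simp [v, slope_u]
  refine ⟨v, ?_, ?_, ?_⟩
  · rintro ⟨i, s⟩ ⟨j, t⟩ h
    have hfij : (f i : ℝ) = f j := by rw [← slope_v (i, s), h, slope_v]
    obtain rfl : i = j := hf (Nat.cast_injective hfij)
    have hu : u i ≠ 0 := Complex.exp_ne_zero _
    cases s <;> cases t <;> simp_all [v, neg_eq_self, self_eq_neg]
  · rintro ⟨i, _ | _⟩ <;> simp [v, norm_u]
  · rintro ⟨i, _ | _⟩ ⟨j, _ | _⟩ <;> simp +contextual [v]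

theorem IsAcute.exists_double [Finite ι] {x : ι → V} (hx : IsAcute x) :
    ∃ y : ι × Bool → WithLp 2 (V × ℂ), IsAcute y := by
  obtain ⟨v, v_inj, norm_v, antipodal⟩ := exists_antipodal_family_unit_circle ι
  suffices h : ∀ a b c, b ≠ a → c ≠ a → b.1 = a.1 → 0 < ⟪v b - v a, v c - v a⟫_ℝ by
    obtain ⟨ε, hε⟩ := (hx.eventually_prod h).exists
    exact ⟨_, hε⟩
  intro a b c hb hc hab
  have hlt : ⟪v a, v c⟫_ℝ < 1 :=
    (inner_lt_one_iff_real_of_norm_eq_one (norm_v a) (norm_v c)).2 (v_inj.ne hc.symm)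
  calc 0 < 2 * (1 - ⟪v a, v c⟫_ℝ) := by linarith
    _ = ⟪-v a - v a, v c - v a⟫_ℝ := by
      rw [inner_sub_left, inner_neg_left, inner_sub_right, real_inner_self_eq_norm_sq, norm_v]
      ring
    _ = ⟪v b - v a, v c - v a⟫_ℝ := by rw [antipodal a b hab hb]

theorem exists_isAcute_euclideanSpace :
    ∀ n : ℕ, ∃ x : Fin (2 ^ (n / 2)) → EuclideanSpace ℝ (Fin n), IsAcute x
  | 0 => ⟨0, isAcute_of_subsingleton (ι := Fin 1) _⟩
  | 1 => ⟨0, isAcute_of_subsingleton (ι := Fin 1) _⟩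
  | n + 2 => by
    obtain ⟨x, hx⟩ := exists_isAcute_euclideanSpace n
    obtain ⟨y, hy⟩ := hx.exists_double
    have hcard :
        Fintype.card (Fin (2 ^ ((n + 2) / 2))) = Fintype.card (Fin (2 ^ (n / 2)) × Bool) := by
      simp [Nat.add_div_right, pow_succ]
    have hdim : Module.finrank ℝ (WithLp 2 (EuclideanSpace ℝ (Fin n) × ℂ)) = n + 2 := by
      rw [(WithLp.linearEquiv 2 ℝ _).finrank_eq]
      simp
    let e := (stdOrthonormalBasis ℝ (WithLp 2 (EuclideanSpace ℝ (Fin n) × ℂ))).reindex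
      (finCongr hdim)
    exact ⟨_, (hy.map e.repr.toLinearIsometry).comp_injective
      (Fintype.equivOfCardEq hcard).injective⟩

end Acute

theorem pow_le_two_pow_half {b : ℝ} (hb : 1 ≤ b) (hb3 : b ^ 3 ≤ 2) {n : ℕ} (hn : 2 ≤ n) :
    b ^ n ≤ 2 ^ (n / 2) :=
  calc b ^ n ≤ b ^ (3 * (n / 2)) := pow_le_pow_right₀ hb (by omega)
    _ = (b ^ 3) ^ (n / 2) := pow_mul b 3 (n / 2)
    _ ≤ 2 ^ (n / 2) := by gcongr

theorem strictly_convex_norm_with_large_equilateral_set_general (n : ℕ) :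
    ∃ N : (Fin n → ℝ) → ℝ,
      (∀ x, 0 ≤ N x) ∧
      (∀ x, N x = 0 ↔ x = 0) ∧
      (∀ (a : ℝ) (x), N (a • x) = |a| * N x) ∧
      (∀ x y, N (x + y) ≤ N x + N y) ∧
      (∀ x y, LinearIndependent ℝ ![x, y] → N (x + y) < N x + N y) ∧
      ∃ S : Finset (Fin n → ℝ),
        (2 : ℝ) ^ (n / 2) ≤ (S.card : ℝ) ∧
        ∃ lam : ℝ, 0 < lam ∧ ∀ x ∈ S, ∀ y ∈ S, x ≠ y → N (x - y) = lam := by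
  obtain ⟨x, hx⟩ := exists_isAcute_euclideanSpace n
  obtain ⟨M, hM, hMx⟩ := hx.exists_isStrictlyConvexNorm_sub_eq_one
  let toE := (WithLp.linearEquiv 2 ℝ (Fin n → ℝ)).symm
  let N : Seminorm ℝ (Fin n → ℝ) := M.comp toE.toLinearMap
  have hN : IsStrictlyConvexNorm N := hM.comp toE.injective
  let S : Finset (Fin n → ℝ) :=
    Finset.univ.map ⟨toE.symm ∘ x, toE.symm.injective.comp hx.injective⟩
  refine ⟨N, apply_nonneg N, fun x => ⟨hN.eq_zero_of_map_eq_zero, fun h => h ▸ map_zero N⟩,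
    map_smul_eq_mul N, map_add_le_add N, fun _ _ => hN.map_add_lt, S, by simp [S], 1, one_pos, ?_⟩
  simp only [S, Finset.mem_map, Finset.mem_univ, true_and]
  rintro _ ⟨i, rfl⟩ _ ⟨j, rfl⟩ hij
  exact hMx i j fun h => hij (by rw [h])

theorem strictly_convex_norm_with_large_equilateral_set
    (n : ℕ) (hn : 271 ≤ n) :
    ∃ N : (Fin n → ℝ) → ℝ,
      (∀ x, 0 ≤ N x) ∧
      (∀ x, N x = 0 ↔ x = 0) ∧
      (∀ (a : ℝ) (x), N (a • x) = |a| * N x) ∧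
      (∀ x y, N (x + y) ≤ N x + N y) ∧
      (∀ x y, LinearIndependent ℝ ![x, y] → N (x + y) < N x + N y) ∧
      ∃ S : Finset (Fin n → ℝ),
        (1.058 : ℝ) ^ n ≤ (S.card : ℝ) ∧
        ∃ lam : ℝ, 0 < lam ∧ ∀ x ∈ S, ∀ y ∈ S, x ≠ y → N (x - y) = lam := by
  obtain ⟨N, h0, hzero, hsmul, hadd, hstrict, S, hS, heq⟩ :=
    strictly_convex_norm_with_large_equilateral_set_general n
  have hbound : (1.058 : ℝ) ^ n ≤ 2 ^ (n / 2) :=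
    pow_le_two_pow_half (by norm_num) (by norm_num) (by lia)
  exact ⟨N, h0, hzero, hsmul, hadd, hstrict, S, hbound.trans hS, heq⟩
end

section
/- For every δ with 0 < δ < 1 there exists n₀ such that for all n ≥ n₀ there exist a natural number m with m > (1 + δ²/2)^n and vectors w_1, …, w_m in Euclidean space ℝ^n satisfying ⟨w_i, w_i⟩ = 1 for all i and |⟨w_i, w_j⟩| < δ for all i ≠ j. -/
/-!
Among the `2 ^ n` sign vectors, which all have length `√n`, choose a maximal family whose pairwise
angles all have cosine less than `δ` in absolute value. By maximality the `2 ^ n` sign vectors are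
covered by the caps of vectors not nearly orthogonal to a member of the family, and by Hoeffding's
inequality such a cap contains at most `2 * 2 ^ n * exp (-n * δ ^ 2 / 2)` of them. Hence the family
has at least `exp (δ ^ 2 / 2) ^ n / 2` members, which eventually exceeds `(1 + δ ^ 2 / 2) ^ n`.
-/

open Finset Filter Real
open scoped RealInnerProductSpace

section GreedyPacking

variable {α : Type*} (r : α → α → Prop) [Std.Symm r] [Std.Irrefl r]

theorem exists_finset_pairwise_and_forall_exists_not [Finite α] :
    ∃ S : Finset α, (S : Set α).Pairwise r ∧ ∀ x, ∃ y ∈ S, ¬ r y x := by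
  classical
  obtain ⟨S, -, hS⟩ := Finite.exists_le_maximal
    (p := fun S : Finset α ↦ (S : Set α).Pairwise r) (a := ∅) (by simp)
  refine ⟨S, hS.prop, fun x ↦ ?_⟩
  by_contra! hx
  have hpair : ((insert x S : Finset α) : Set α).Pairwise r := by
    rw [coe_insert]
    exact hS.prop.insert_of_symm fun y hy _ ↦ Std.Symm.symm _ _ (hx y hy)
  have hxS : x ∈ S := hS.le_of_ge hpair (subset_insert x S) (mem_insert_self x S)
  exact irrefl x (hx x hxS)

theorem exists_finset_pairwise_and_card_le_card_mul [Fintype α] [DecidableRel r] {R : Type*}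
    [Semiring R] [PartialOrder R] [IsOrderedRing R] {K : R} (hK : ∀ y, (#{x | ¬ r y x} : R) ≤ K) :
    ∃ S : Finset α, (S : Set α).Pairwise r ∧ (Fintype.card α : R) ≤ #S * K := by
  classical
  obtain ⟨S, hpair, hcover⟩ := exists_finset_pairwise_and_forall_exists_not r
  refine ⟨S, hpair, ?_⟩
  have huniv : (univ : Finset α) = S.biUnion fun y ↦ {x | ¬ r y x} := by
    ext x
    simpa using hcover x
  calc (Fintype.card α : R)
      = #(S.biUnion fun y ↦ {x | ¬ r y x}) := by rw [← huniv, card_univ]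
    _ ≤ ∑ y ∈ S, (#{x | ¬ r y x} : R) := by
        rw [← Nat.cast_sum]
        exact Nat.mono_cast card_biUnion_le
    _ ≤ #S * K := by simpa only [nsmul_eq_mul] using sum_le_card_nsmul S _ K fun y _ ↦ hK y

end GreedyPacking

section SignVector

variable {ι : Type*}

/-- The vertex of the cube `[-1, 1] ^ ι` with the given signs as coordinates. Signs are encoded as
the units of `ℤ`. -/
def signVector (ε : ι → ℤˣ) : EuclideanSpace ℝ ι := WithLp.toLp 2 fun i ↦ ((ε i : ℤ) : ℝ)

theorem signVector_ne_zero [Nonempty ι] (ε : ι → ℤˣ) : signVector ε ≠ 0 := by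
  obtain ⟨i⟩ := ‹Nonempty ι›
  exact fun h ↦ (ε i).ne_zero (by simpa [signVector] using congrArg (· i) h)

variable [Fintype ι]

theorem inner_signVector (a : EuclideanSpace ℝ ι) (ε : ι → ℤˣ) :
    ⟪a, signVector ε⟫ = ∑ i, a i * (ε i : ℤ) := by
  simp [signVector, PiLp.inner_apply, mul_comm]

theorem norm_signVector (ε : ι → ℤˣ) : ‖signVector ε‖ = √(Fintype.card ι) := by
  have hsq (u : ℤˣ) : ((u : ℤ) : ℝ) ^ 2 = 1 := by
    rcases Int.units_eq_one_or u with rfl | rfl <;> simp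
  simp [EuclideanSpace.norm_eq, signVector, hsq]

/-- The unit vector in the direction of `signVector ε`; its coordinates are `±1 / √n` where `n` is
the size of `ι`. -/
noncomputable def unitSignVector (ε : ι → ℤˣ) : EuclideanSpace ℝ ι :=
  NormedSpace.normalize (signVector ε)

theorem norm_unitSignVector [Nonempty ι] (ε : ι → ℤˣ) : ‖unitSignVector ε‖ = 1 :=
  NormedSpace.norm_normalize (signVector_ne_zero ε)

theorem inner_unitSignVector (a : EuclideanSpace ℝ ι) (ε : ι → ℤˣ) :
    ⟪a, unitSignVector ε⟫ = ⟪a, signVector ε⟫ / √(Fintype.card ι) := by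
  rw [unitSignVector, NormedSpace.normalize, real_inner_smul_right, norm_signVector, inv_mul_eq_div]

variable [DecidableEq ι]

theorem sum_exp_inner_signVector (a : EuclideanSpace ℝ ι) :
    ∑ ε : ι → ℤˣ, exp ⟪a, signVector ε⟫ = ∏ i, (2 * cosh (a i)) := by
  have hcosh (c : ℝ) : ∑ u : ℤˣ, exp (c * (u : ℤ)) = 2 * cosh c := by
    simp [UnitsInt.univ, cosh_eq, mul_div_cancel₀]
  simp only [inner_signVector, exp_sum, ← hcosh, Fintype.prod_sum]

theorem sum_exp_inner_signVector_le (a : EuclideanSpace ℝ ι) :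
    ∑ ε : ι → ℤˣ, exp ⟪a, signVector ε⟫ ≤ 2 ^ Fintype.card ι * exp (‖a‖ ^ 2 / 2) := by
  calc ∑ ε : ι → ℤˣ, exp ⟪a, signVector ε⟫
      = ∏ i, (2 * cosh (a i)) := sum_exp_inner_signVector a
    _ ≤ ∏ i, (2 * exp (a i ^ 2 / 2)) := by
        gcongr
        exact cosh_le_exp_half_sq _
    _ = 2 ^ Fintype.card ι * exp (‖a‖ ^ 2 / 2) := by
        rw [prod_mul_distrib, prod_const, card_univ, ← exp_sum, ← sum_div,
          EuclideanSpace.real_norm_sq_eq]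

theorem card_filter_le_inner_signVector_le {a : EuclideanSpace ℝ ι} (ha : a ≠ 0) {t : ℝ}
    (ht : 0 ≤ t) :
    (#{ε : ι → ℤˣ | t ≤ ⟪a, signVector ε⟫} : ℝ) ≤
      2 ^ Fintype.card ι * exp (-(t ^ 2 / (2 * ‖a‖ ^ 2))) := by
  -- The value of `c` minimizing `c ^ 2 * ‖a‖ ^ 2 / 2 - c * t`.
  set c := t / ‖a‖ ^ 2 with hc
  have hc0 : 0 ≤ c := by positivity
  have hmarkov : (#{ε : ι → ℤˣ | t ≤ ⟪a, signVector ε⟫} : ℝ) * exp (c * t) ≤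
      2 ^ Fintype.card ι * exp (‖c • a‖ ^ 2 / 2) := by
    calc (#{ε : ι → ℤˣ | t ≤ ⟪a, signVector ε⟫} : ℝ) * exp (c * t)
        ≤ ∑ ε : ι → ℤˣ with t ≤ ⟪a, signVector ε⟫, exp ⟪c • a, signVector ε⟫ := by
          rw [← nsmul_eq_mul]
          refine card_nsmul_le_sum _ _ _ fun ε hε ↦ ?_
          rw [real_inner_smul_left]
          gcongr
          exact (mem_filter.1 hε).2
      _ ≤ ∑ ε : ι → ℤˣ, exp ⟪c • a, signVector ε⟫ :=
          sum_le_univ_sum_of_nonneg fun _ ↦ (exp_pos _).le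
      _ ≤ 2 ^ Fintype.card ι * exp (‖c • a‖ ^ 2 / 2) := sum_exp_inner_signVector_le _
  have hexponent : ‖c • a‖ ^ 2 / 2 - c * t = -(t ^ 2 / (2 * ‖a‖ ^ 2)) := by
    rw [norm_smul, norm_of_nonneg hc0, hc]
    have : ‖a‖ ≠ 0 := norm_ne_zero_iff.2 ha
    field_simp
    ring
  rwa [← hexponent, exp_sub, ← mul_div_assoc, le_div_iff₀ (exp_pos _)]

theorem card_filter_le_abs_inner_signVector_le {a : EuclideanSpace ℝ ι} (ha : a ≠ 0) {t : ℝ}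
    (ht : 0 ≤ t) :
    (#{ε : ι → ℤˣ | t ≤ |⟪a, signVector ε⟫|} : ℝ) ≤
      2 * (2 ^ Fintype.card ι * exp (-(t ^ 2 / (2 * ‖a‖ ^ 2)))) := by
  have hneg := card_filter_le_inner_signVector_le (neg_ne_zero.2 ha) ht
  simp only [inner_neg_left, norm_neg] at hneg
  calc (#{ε : ι → ℤˣ | t ≤ |⟪a, signVector ε⟫|} : ℝ)
      ≤ #{ε : ι → ℤˣ | t ≤ ⟪a, signVector ε⟫} + #{ε : ι → ℤˣ | t ≤ -⟪a, signVector ε⟫} := by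
        simp only [le_abs, filter_or]
        exact_mod_cast card_union_le _ _
    _ ≤ 2 * (2 ^ Fintype.card ι * exp (-(t ^ 2 / (2 * ‖a‖ ^ 2)))) := by
        linarith [card_filter_le_inner_signVector_le ha ht]

theorem card_filter_le_abs_inner_unitSignVector_le {a : EuclideanSpace ℝ ι} (ha : ‖a‖ = 1)
    {δ : ℝ} (hδ : 0 ≤ δ) :
    (#{ε : ι → ℤˣ | δ ≤ |⟪a, unitSignVector ε⟫|} : ℝ) ≤
      2 * (2 ^ Fintype.card ι * exp (-(Fintype.card ι * (δ ^ 2 / 2)))) := by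
  have : Nonempty ι := not_isEmpty_iff.1 fun _ ↦ by simp [Subsingleton.elim a 0] at ha
  have hpos : 0 < √(Fintype.card ι : ℝ) := sqrt_pos.2 (mod_cast Fintype.card_pos)
  have hiff (ε : ι → ℤˣ) : δ ≤ |⟪a, unitSignVector ε⟫| ↔
      δ * √(Fintype.card ι) ≤ |⟪a, signVector ε⟫| := by
    rw [inner_unitSignVector, abs_div, abs_of_pos hpos, le_div_iff₀ hpos]
  have hexponent :
      (δ * √(Fintype.card ι)) ^ 2 / (2 * ‖a‖ ^ 2) = Fintype.card ι * (δ ^ 2 / 2) := by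
    rw [ha, mul_pow, sq_sqrt (Nat.cast_nonneg _)]
    ring
  simp only [hiff, ← hexponent]
  exact card_filter_le_abs_inner_signVector_le (norm_ne_zero_iff.1 (by simp [ha])) (by positivity)

end SignVector

theorem exists_finset_unitSignVector_pairwise_abs_inner_lt {ι : Type*} [Fintype ι] [Nonempty ι]
    {δ : ℝ} (hδ0 : 0 ≤ δ) (hδ1 : δ ≤ 1) :
    ∃ S : Finset (ι → ℤˣ),
      (S : Set (ι → ℤˣ)).Pairwise (fun ε η ↦ |⟪unitSignVector ε, unitSignVector η⟫| < δ) ∧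
      exp (Fintype.card ι * (δ ^ 2 / 2)) ≤ 2 * #S := by
  classical
  let r (ε η : ι → ℤˣ) : Prop := |⟪unitSignVector ε, unitSignVector η⟫| < δ
  have : Std.Symm r := ⟨fun ε η h ↦ by simpa only [r, real_inner_comm] using h⟩
  have : Std.Irrefl r := ⟨fun ε ↦ by simpa [r, norm_unitSignVector] using hδ1⟩
  obtain ⟨S, hpair, hcard⟩ := exists_finset_pairwise_and_card_le_card_mul r (R := ℝ) fun ε ↦ by
    simpa only [r, not_lt] using
      card_filter_le_abs_inner_unitSignVector_le (norm_unitSignVector ε) hδ0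
  refine ⟨S, hpair, ?_⟩
  rw [Fintype.card_fun, Fintype.card_units_int, Nat.cast_pow, Nat.cast_ofNat] at hcard
  have hscaled : 2 ^ Fintype.card ι * exp (Fintype.card ι * (δ ^ 2 / 2)) ≤
      2 ^ Fintype.card ι * (2 * #S) := by
    calc 2 ^ Fintype.card ι * exp (Fintype.card ι * (δ ^ 2 / 2))
        ≤ #S * (2 * (2 ^ Fintype.card ι * exp (-(Fintype.card ι * (δ ^ 2 / 2))))) *
            exp (Fintype.card ι * (δ ^ 2 / 2)) := by gcongr
      _ = 2 ^ Fintype.card ι * (2 * #S) := by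
          rw [exp_neg]
          field_simp
  exact le_of_mul_le_mul_left hscaled (by positivity)

theorem eventually_const_mul_one_add_pow_lt_exp {x : ℝ} (hx : 0 < x) (C : ℝ) :
    ∀ᶠ n : ℕ in atTop, C * (1 + x) ^ n < exp (n * x) := by
  have hratio : 1 < exp x / (1 + x) := by
    rw [one_lt_div (by positivity), add_comm]
    exact add_one_lt_exp hx.ne'
  filter_upwards [(tendsto_pow_atTop_atTop_of_one_lt hratio).eventually_gt_atTop C] with n hn
  rwa [div_pow, lt_div_iff₀ (by positivity), ← exp_nat_mul] at hn

theorem almost_orthogonal_vectors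
    (δ : ℝ) (hδ0 : 0 < δ) (hδ1 : δ < 1) :
    ∃ n₀ : ℕ, ∀ n : ℕ, n₀ ≤ n →
      ∃ m : ℕ, (1 + δ ^ 2 / 2) ^ n < (m : ℝ) ∧
        ∃ w : Fin m → EuclideanSpace ℝ (Fin n),
          (∀ i, (inner ℝ (w i) (w i) : ℝ) = 1) ∧
          (∀ i j, i ≠ j → |(inner ℝ (w i) (w j) : ℝ)| < δ) := by
  refine eventually_atTop.1 ?_
  filter_upwards [eventually_const_mul_one_add_pow_lt_exp (half_pos (pow_pos hδ0 2)) 2,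
    eventually_ge_atTop 1] with n hgrowth hn
  have : NeZero n := ⟨Nat.one_le_iff_ne_zero.1 hn⟩
  obtain ⟨S, hpair, hcard⟩ :=
    exists_finset_unitSignVector_pairwise_abs_inner_lt (ι := Fin n) hδ0.le hδ1.le
  rw [Fintype.card_fin] at hcard
  let e := S.equivFin.symm
  refine ⟨#S, by linarith, fun i ↦ unitSignVector (e i : Fin n → ℤˣ), fun i ↦ ?_,
    fun i j hij ↦ hpair (e i).2 (e j).2 fun h ↦ hij (e.injective (Subtype.ext h))⟩
  rw [real_inner_self_eq_norm_sq, norm_unitSignVector, one_pow]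
end

section
/- Let X be a real normed vector space with finrank ℝ X ≥ 2. Then there exist three points a, b, c ∈ X with ‖a − b‖ = ‖b − c‖ = ‖a − c‖ = 1; in particular X contains an equilateral set of 3 points. -/
/-!
In real dimension greater than one, spheres are connected. On a sphere of radius `r`, the distance
to a fixed point `a` of the sphere is continuous, vanishes at `a` and equals `2 * r` at the antipode
of `a`, so it takes every value in between. Taking the value `r` gives a third vertex for the
segment from `a` to the centre.
-/

open Module

section

open Metric

variable {X : Type*} [NormedAddCommGroup X] [NormedSpace ℝ X]

theorem exists_mem_sphere_dist_eq (hrank : 1 < Module.rank ℝ X) {x a : X} {r d : ℝ}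
    (ha : a ∈ sphere x r) (hd : d ∈ Set.Icc 0 (2 * r)) : ∃ b ∈ sphere x r, dist a b = d := by
  have antipode_mem : Equiv.pointReflection x a ∈ sphere x r := by
    rwa [mem_sphere, dist_pointReflection_left, ← mem_sphere']
  have dist_antipode : dist a (Equiv.pointReflection x a) = 2 * r := by
    rw [dist_right_pointReflection ℝ, mem_sphere'.mp ha, Real.norm_two]
  have Icc_subset_image := (isPreconnected_sphere hrank x r).intermediate_value ha antipode_mem
    (f := dist a) (by fun_prop)
  rw [dist_self, dist_antipode] at Icc_subset_image
  exact Icc_subset_image hd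

theorem exists_dist_eq_dist_and_dist_eq_dist (hrank : 1 < Module.rank ℝ X) (a b : X) :
    ∃ c, dist a c = dist a b ∧ dist b c = dist a b := by
  have hd : dist a b ∈ Set.Icc 0 (2 * dist a b) :=
    ⟨dist_nonneg, le_mul_of_one_le_left dist_nonneg one_le_two⟩
  obtain ⟨c, hc, hac⟩ := exists_mem_sphere_dist_eq hrank (mem_sphere.mpr rfl) hd
  exact ⟨c, hac, mem_sphere'.mp hc⟩

end

theorem exists_equilateral_triangle_general
    (X : Type*) [NormedAddCommGroup X] [NormedSpace ℝ X]
    (hrank : 1 < Module.rank ℝ X) :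
    ∃ a b c : X, ‖a - b‖ = 1 ∧ ‖b - c‖ = 1 ∧ ‖a - c‖ = 1 := by
  have : Nontrivial X := rank_pos_iff_nontrivial.mp (zero_lt_one.trans hrank)
  obtain ⟨a, ha⟩ := exists_norm_eq X zero_le_one
  obtain ⟨c, hac, hbc⟩ := exists_dist_eq_dist_and_dist_eq_dist hrank a 0
  rw [dist_zero_right, ha, dist_eq_norm] at hac hbc
  exact ⟨a, 0, c, by rwa [sub_zero], hbc, hac⟩

theorem exists_equilateral_triangle
    (X : Type*) [NormedAddCommGroup X] [NormedSpace ℝ X]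
    (hdim : 2 ≤ finrank ℝ X) :
    ∃ a b c : X, ‖a - b‖ = 1 ∧ ‖b - c‖ = 1 ∧ ‖a - c‖ = 1 :=
  exists_equilateral_triangle_general X (by exact_mod_cast lt_rank_of_lt_finrank hdim)
end

section
/- Let X be a real normed vector space of finite dimension 2. Then: (i) X contains an equilateral set of 3 points; (ii) X contains no equilateral set of 5 points; and (iii) X contains an equilateral set of 4 points if and only if X is linearly isometric to ℓ∞², i.e. to (Fin 2 → ℝ) with the supremum norm. -/
open Module

/-!
Let `∑ f z • z = 0`, `∑ f z = 0` be an affine relation between the points of an equilateral set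
of scale `l`, normalised so that its positive coefficients add up to `1`. It exhibits one point as
two convex combinations, with weights `f⁺` and `f⁻`. That point has distance at most
`(1 - f x⁺) l` from `x` and at most `(1 - f y⁻) l` from `y`, so `f x⁺ + f y⁻ ≤ 1` whenever
`x ≠ y`. Four points of a plane are affinely dependent, and these inequalities force the
coefficients to be `1/2, 1/2, -1/2, -1/2`: the four points are the vertices of a parallelogram,
whose sides and diagonals all have length `l`. Vectors `e`, `f` of norm `1` with `‖e ± f‖ ≤ 1`
satisfy `‖x e + y f‖ = max |x| |y|`, so the rescaled side vectors span a copy of `ℓ∞²`.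

If `S` had five points, fix `a ∈ S`; for each other point `e` the vertex `φ e` opposite to `a` in
the parallelogram `S \ {e}` satisfies `∑ S - e = 2 (a + φ e)`. Hence `φ e` and `φ e'` would be at
distance `l / 2` for `e ≠ e'`, but two points of `S` are at distance `0` or `l`.
-/

/-- `S` is an equilateral set of scale `l`: its points are pairwise at distance `l > 0`. Sets with
at most one point are equilateral of every positive scale. -/
def IsEquilateral {X : Type*} [NormedAddCommGroup X] (S : Set X) (l : ℝ) : Prop :=
  0 < l ∧ S.Pairwise fun x y => ‖x - y‖ = l

lemma IsEquilateral.mono {X : Type*} [NormedAddCommGroup X] {S T : Set X} {l : ℝ}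
    (hS : IsEquilateral S l) (hTS : T ⊆ S) : IsEquilateral T l :=
  ⟨hS.1, hS.2.mono hTS⟩

section Existence

variable {X : Type*} [NormedAddCommGroup X] [NormedSpace ℝ X]

lemma exists_norm_eq_norm_sub_eq (h : 1 < Module.rank ℝ X) (u : X) :
    ∃ v : X, ‖v‖ = ‖u‖ ∧ ‖u - v‖ = ‖u‖ := by
  have hmem : ‖u‖ ∈ Set.Icc ‖u - u‖ ‖u - -u‖ := by
    rw [sub_self, norm_zero, sub_neg_eq_add, ← two_smul ℝ u, norm_smul, Real.norm_two]
    constructor <;> linarith [norm_nonneg u]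
  obtain ⟨v, hv, huv⟩ := (isPreconnected_sphere h (0 : X) ‖u‖).intermediate_value
    (a := u) (b := -u) (f := fun v => ‖u - v‖) (by simp) (by simp) (by fun_prop) hmem
  exact ⟨v, by simpa using hv, huv⟩

lemma exists_isEquilateral_card_eq_three (h : 1 < Module.rank ℝ X) :
    ∃ S : Finset X, S.card = 3 ∧ ∃ l : ℝ, IsEquilateral (S : Set X) l := by
  classical
  have : Nontrivial X := rank_pos_iff_nontrivial.1 (zero_lt_one.trans h)
  obtain ⟨u, hu⟩ := exists_ne (0 : X)
  obtain ⟨v, hv, huv⟩ := exists_norm_eq_norm_sub_eq h u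
  have hv0 : v ≠ 0 := norm_ne_zero_iff.1 (hv ▸ norm_ne_zero_iff.2 hu)
  have huv0 : u ≠ v := sub_ne_zero.1 (norm_ne_zero_iff.1 (huv ▸ norm_ne_zero_iff.2 hu))
  refine ⟨{0, u, v}, Finset.card_eq_three.2 ⟨0, u, v, hu.symm, hv0.symm, huv0, rfl⟩,
    ‖u‖, norm_pos_iff.2 hu, ?_⟩
  simp [Set.pairwise_insert, hv, huv, norm_sub_rev v u]

lemma isEquilateral_pi_zero_one (ι : Type*) [Fintype ι] :
    IsEquilateral (Set.univ.pi fun _ : ι => ({0, 1} : Set ℝ)) 1 := by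
  refine ⟨one_pos, fun x hx y hy hxy => le_antisymm ?_ ?_⟩
  · refine (pi_norm_le_iff_of_nonneg zero_le_one).2 fun i => ?_
    rcases hx i trivial with h | h <;> rcases hy i trivial with h' | h' <;> simp_all
  · obtain ⟨i, hi⟩ := Function.ne_iff.1 hxy
    refine le_trans ?_ (norm_le_pi_norm (x - y) i)
    rcases hx i trivial with h | h <;> rcases hy i trivial with h' | h' <;> simp_all

lemma IsEquilateral.image {Y : Type*} [NormedAddCommGroup Y] [NormedSpace ℝ Y] {S : Set X} {l : ℝ}
    (hS : IsEquilateral S l) (T : X →ₗᵢ[ℝ] Y) : IsEquilateral (T '' S) l := by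
  refine ⟨hS.1, ?_⟩
  rintro _ ⟨x, hx, rfl⟩ _ ⟨y, hy, rfl⟩ hxy
  rw [← map_sub, T.norm_map, hS.2 hx hy (ne_of_apply_ne T hxy)]

lemma exists_isEquilateral_card_eq_two_pow {ι : Type*} [Fintype ι] (T : (ι → ℝ) →ₗᵢ[ℝ] X) :
    ∃ S : Finset X, S.card = 2 ^ Fintype.card ι ∧ ∃ l : ℝ, IsEquilateral (S : Set X) l := by
  classical
  refine ⟨(Fintype.piFinset fun _ : ι => {0, 1}).map ⟨T, T.injective⟩, by simp, 1, ?_⟩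
  simpa using (isEquilateral_pi_zero_one ι).image T

end Existence

section AffineRelations

variable {X : Type*} [NormedAddCommGroup X] [NormedSpace ℝ X] {S : Finset X} {l : ℝ}

lemma IsEquilateral.norm_sum_smul_sub_le (hS : IsEquilateral (S : Set X) l) {w : X → ℝ}
    (hw : ∀ z ∈ S, 0 ≤ w z) {x : X} (hx : x ∈ S) :
    ‖(∑ z ∈ S, w z) • x - ∑ z ∈ S, w z • z‖ ≤ (∑ z ∈ S, w z - w x) * l := by
  classical
  calc ‖(∑ z ∈ S, w z) • x - ∑ z ∈ S, w z • z‖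
      = ‖∑ z ∈ S.erase x, w z • (x - z)‖ := by
        rw [Finset.sum_erase S (by simp), Finset.sum_smul, ← Finset.sum_sub_distrib]
        simp only [smul_sub]
    _ ≤ ∑ z ∈ S.erase x, ‖w z • (x - z)‖ := norm_sum_le _ _
    _ = ∑ z ∈ S.erase x, w z * l := Finset.sum_congr rfl fun z hz => by
        obtain ⟨hzx, hzS⟩ := Finset.mem_erase.1 hz
        rw [norm_smul, Real.norm_of_nonneg (hw z hzS), hS.2 hx hzS hzx.symm]
    _ = (∑ z ∈ S, w z - w x) * l := by rw [← Finset.sum_mul, Finset.sum_erase_eq_sub hx]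

lemma IsEquilateral.add_le_sum (hS : IsEquilateral (S : Set X) l) {w v : X → ℝ}
    (hw : ∀ z ∈ S, 0 ≤ w z) (hv : ∀ z ∈ S, 0 ≤ v z) (hsum : ∑ z ∈ S, w z = ∑ z ∈ S, v z)
    (hsmul : ∑ z ∈ S, w z • z = ∑ z ∈ S, v z • z) {x y : X} (hx : x ∈ S) (hy : y ∈ S)
    (hxy : x ≠ y) : w x + v y ≤ ∑ z ∈ S, w z := by
  set W := ∑ z ∈ S, w z
  set p := ∑ z ∈ S, w z • z
  have hxp : ‖W • x - p‖ ≤ (W - w x) * l := hS.norm_sum_smul_sub_le hw hx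
  have hyp : ‖W • y - p‖ ≤ (W - v y) * l := by
    rw [hsum, hsmul]
    exact hS.norm_sum_smul_sub_le hv hy
  have hW : 0 ≤ W := Finset.sum_nonneg hw
  have hWl : W * l ≤ (W - w x + (W - v y)) * l :=
    calc W * l = ‖W • x - W • y‖ := by
          rw [← smul_sub, norm_smul, Real.norm_of_nonneg hW, hS.2 hx hy hxy]
      _ ≤ ‖W • x - p‖ + ‖W • y - p‖ := by
          rw [norm_sub_rev (W • y)]
          exact norm_sub_le_norm_sub_add_norm_sub _ _ _
      _ ≤ (W - w x + (W - v y)) * l := by linarith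
  linarith [le_of_mul_le_mul_right hWl hS.1]

lemma IsEquilateral.posPart_add_negPart_le (hS : IsEquilateral (S : Set X) l) {f : X → ℝ}
    (hf : ∑ z ∈ S, f z = 0) (hfs : ∑ z ∈ S, f z • z = 0) {x y : X} (hx : x ∈ S) (hy : y ∈ S)
    (hxy : x ≠ y) : (f x)⁺ + (f y)⁻ ≤ ∑ z ∈ S, (f z)⁺ := by
  refine hS.add_le_sum (w := fun z => (f z)⁺) (v := fun z => (f z)⁻)
    (fun z _ => posPart_nonneg _) (fun z _ => negPart_nonneg _) ?_ ?_ hx hy hxy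
  · rw [← sub_eq_zero, ← Finset.sum_sub_distrib]
    simpa only [posPart_sub_negPart] using hf
  · rw [← sub_eq_zero, ← Finset.sum_sub_distrib]
    simpa only [← sub_smul, posPart_sub_negPart] using hfs

/- If `x` were the only point with a positive coefficient, `(f x)⁺` would be the whole sum of the
positive parts, leaving no room for a negative coefficient. -/
lemma IsEquilateral.two_le_card_filter_pos (hS : IsEquilateral (S : Set X) l) {f : X → ℝ}
    (hf : ∑ z ∈ S, f z = 0) (hfs : ∑ z ∈ S, f z • z = 0) (hne : ∃ z ∈ S, f z ≠ 0) :
    2 ≤ (S.filter (0 < f ·)).card := by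
  obtain ⟨x, hxS, hx⟩ := Finset.exists_pos_of_sum_zero_of_exists_nonzero f hf hne
  obtain ⟨y, hyS, hy⟩ : ∃ y ∈ S, f y < 0 := by
    simpa using Finset.exists_pos_of_sum_zero_of_exists_nonzero (-f) (by simp [hf]) (by simpa)
  have hxy : x ≠ y := by rintro rfl; exact lt_asymm hx hy
  by_contra! hcard
  have honly : ∀ z ∈ S, z ≠ x → (f z)⁺ = 0 := fun z hzS hzx => posPart_eq_zero.2 <| by
    by_contra! hz
    exact hzx (Finset.card_le_one_iff.1 (Nat.le_of_lt_succ hcard)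
      (Finset.mem_filter.2 ⟨hzS, hz⟩) (Finset.mem_filter.2 ⟨hxS, hx⟩))
  have hle := hS.posPart_add_negPart_le hf hfs hxS hyS hxy
  rw [Finset.sum_eq_single_of_mem x hxS honly] at hle
  linarith [negPart_pos hy]

lemma IsEquilateral.sum_eq_sum_of_pos_of_neg [DecidableEq X] {A B : Finset X} {f : X → ℝ}
    (hS : IsEquilateral ((A ∪ B : Finset X) : Set X) l) (hA : A.card = 2) (hB : B.card = 2)
    (hpos : ∀ z ∈ A, 0 < f z) (hneg : ∀ z ∈ B, f z < 0)
    (hf : ∑ z ∈ A ∪ B, f z = 0) (hfs : ∑ z ∈ A ∪ B, f z • z = 0) :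
    ∑ z ∈ A, z = ∑ z ∈ B, z := by
  have hne : ∀ x ∈ A, ∀ y ∈ B, x ≠ y := by
    rintro x hx _ hy rfl
    exact lt_asymm (hpos x hx) (hneg x hy)
  have hdisj : Disjoint A B := Finset.disjoint_iff_ne.2 hne
  have hposPart : ∑ z ∈ A ∪ B, (f z)⁺ = ∑ z ∈ A, f z := by
    rw [Finset.sum_union hdisj, Finset.sum_congr rfl fun z hz => posPart_of_nonneg (hpos z hz).le,
      Finset.sum_eq_zero fun z hz => posPart_of_nonpos (hneg z hz).le, add_zero]
  have hle : ∀ x ∈ A, ∀ y ∈ B, f x - f y ≤ ∑ z ∈ A, f z := by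
    intro x hx y hy
    have := hS.posPart_add_negPart_le hf hfs (Finset.mem_union_left B hx)
      (Finset.mem_union_right A hy) (hne x hx y hy)
    rwa [posPart_of_nonneg (hpos x hx).le, negPart_of_nonpos (hneg y hy).le, hposPart,
      ← sub_eq_add_neg] at this
  rw [Finset.sum_union hdisj] at hf hfs
  obtain ⟨a, b, hab, rfl⟩ := Finset.card_eq_two.1 hA
  obtain ⟨c, d, hcd, rfl⟩ := Finset.card_eq_two.1 hB
  simp only [Finset.sum_pair hab, Finset.sum_pair hcd] at hf hfs hle ⊢
  have hac := hle a (by simp) c (by simp)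
  have had := hle a (by simp) d (by simp)
  have hbc := hle b (by simp) c (by simp)
  have hbd := hle b (by simp) d (by simp)
  have hfb : f b = f a := by linarith
  have hfc : f c = -f a := by linarith
  have hfd : f d = -f a := by linarith
  rw [hfb, hfc, hfd, ← smul_add, ← smul_add, neg_smul, add_neg_eq_zero] at hfs
  exact smul_right_injective X (hpos a (by simp)).ne' hfs

end AffineRelations

section FourPoints

variable {X : Type*} [NormedAddCommGroup X] [NormedSpace ℝ X] [FiniteDimensional ℝ X]
  {S : Finset X} {l : ℝ}

lemma IsEquilateral.exists_sum_eq_sum_sdiff [DecidableEq X] (hdim : finrank ℝ X ≤ 2)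
    (hS : IsEquilateral (S : Set X) l) (hcard : S.card = 4) :
    ∃ A ⊆ S, A.card = 2 ∧ ∑ z ∈ A, z = ∑ z ∈ S \ A, z := by
  obtain ⟨f, hfs, hf, hne⟩ :=
    exists_nontrivial_relation_sum_zero_of_finrank_succ_lt_card (R := ℝ) (t := S) (by omega)
  set A := S.filter (0 < f ·)
  set B := S.filter (f · < 0)
  have hA : 2 ≤ A.card := hS.two_le_card_filter_pos hf hfs hne
  have hB : 2 ≤ B.card := by
    simpa only [Left.neg_pos_iff] using hS.two_le_card_filter_pos (f := fun z => -f z)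
      (by simp [hf]) (by simp [hfs]) (by simpa using hne)
  have hdisj : Disjoint A B := Finset.disjoint_filter.2 fun z _ => lt_asymm
  have hsub : A ∪ B ⊆ S := Finset.union_subset (Finset.filter_subset _ _) (Finset.filter_subset _ _)
  have hle := Finset.card_le_card hsub
  have hunion : A ∪ B = S := Finset.eq_of_subset_of_card_le hsub <| by
    rw [Finset.card_union_of_disjoint hdisj]
    omega
  rw [Finset.card_union_of_disjoint hdisj] at hle
  refine ⟨A, Finset.filter_subset _ _, by omega, ?_⟩
  rw [← hunion, Finset.union_sdiff_cancel_left hdisj]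
  rw [← hunion] at hS hf hfs
  exact hS.sum_eq_sum_of_pos_of_neg (by omega) (by omega)
    (fun z hz => (Finset.mem_filter.1 hz).2) (fun z hz => (Finset.mem_filter.1 hz).2) hf hfs

lemma IsEquilateral.exists_sum_eq_two_smul_add (hdim : finrank ℝ X ≤ 2)
    (hS : IsEquilateral (S : Set X) l) (hcard : S.card = 4) {a : X} (ha : a ∈ S) :
    ∃ b ∈ S, ∑ z ∈ S, z = (2 : ℝ) • (a + b) := by
  classical
  obtain ⟨A, hAS, hA, hsum⟩ := hS.exists_sum_eq_sum_sdiff hdim hcard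
  wlog haA : a ∈ A generalizing A
  · exact this (S \ A) Finset.sdiff_subset (by rw [Finset.card_sdiff_of_subset hAS]; omega)
      (by rw [Finset.sdiff_sdiff_eq_self hAS, hsum]) (Finset.mem_sdiff.2 ⟨ha, haA⟩)
  obtain ⟨b, hbA, hba⟩ := Finset.exists_mem_ne (by omega : 1 < A.card) a
  have hAab : {a, b} = A := Finset.eq_of_subset_of_card_le (by simp [Finset.insert_subset_iff, *])
    (by rw [hA, Finset.card_pair hba.symm])
  refine ⟨b, hAS hbA, ?_⟩
  rw [← Finset.sum_sdiff hAS, ← hsum, ← hAab, Finset.sum_pair hba.symm, two_smul]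

lemma IsEquilateral.card_le_four (hdim : finrank ℝ X ≤ 2) (hS : IsEquilateral (S : Set X) l) :
    S.card ≤ 4 := by
  classical
  by_contra! hlt
  wlog hcard : S.card = 5 generalizing S
  · obtain ⟨T, hTS, hT⟩ := Finset.exists_subset_card_eq (n := 5) hlt
    exact this (hS.mono hTS) hT.ge hT
  have hopp : ∀ a ∈ S, ∀ e ∈ S, e ≠ a →
      ∃ b ∈ S, ∑ z ∈ S, z = e + (2 : ℝ) • (a + b) := by
    intro a ha e he hea
    obtain ⟨b, hb, hsum⟩ := (hS.mono (Finset.erase_subset e S)).exists_sum_eq_two_smul_add hdim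
      (by rw [Finset.card_erase_of_mem he, hcard]) (Finset.mem_erase.2 ⟨hea.symm, ha⟩)
    exact ⟨b, Finset.mem_of_mem_erase hb, by rw [← hsum, Finset.add_sum_erase S (fun z => z) he]⟩
  obtain ⟨a, ha, e, he, e', he', hae, hae', hee'⟩ :=
    Finset.two_lt_card.1 (by omega : 2 < S.card)
  obtain ⟨b, hb, hsum⟩ := hopp a ha e he hae.symm
  obtain ⟨b', hb', hsum'⟩ := hopp a ha e' he' hae'.symm
  have hsub : e - e' = (2 : ℝ) • (b' - b) := by
    linear_combination (norm := module) hsum' - hsum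
  have hbb' : b' ≠ b := by
    rintro rfl
    exact hee' (sub_eq_zero.1 (by simpa using hsub))
  have hnorm : l = 2 * l :=
    calc l = ‖e - e'‖ := (hS.2 he he' hee').symm
      _ = 2 * ‖b' - b‖ := by rw [hsub, norm_smul, Real.norm_two]
      _ = 2 * l := by rw [hS.2 hb' hb hbb']
  linarith [hS.1]

end FourPoints

section Parallelogram

variable {X : Type*} [NormedAddCommGroup X] [NormedSpace ℝ X]

lemma norm_smul_add_smul_le_max {e f : X} (hadd : ‖e + f‖ ≤ 1) (hsub : ‖e - f‖ ≤ 1) (x y : ℝ) :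
    ‖x • e + y • f‖ ≤ max |x| |y| :=
  calc ‖x • e + y • f‖ = ‖((x + y) / 2) • (e + f) + ((x - y) / 2) • (e - f)‖ := by
        congr 1; module
    _ ≤ |(x + y) / 2| * ‖e + f‖ + |(x - y) / 2| * ‖e - f‖ := by
        simpa only [norm_smul, Real.norm_eq_abs] using
          norm_add_le (((x + y) / 2) • (e + f)) (((x - y) / 2) • (e - f))
    _ ≤ |(x + y) / 2| * 1 + |(x - y) / 2| * 1 := by gcongr
    _ = max |x| |y| := by grind

lemma norm_smul_add_smul_eq_max {e f : X} (he : ‖e‖ = 1) (hf : ‖f‖ = 1) (hadd : ‖e + f‖ ≤ 1)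
    (hsub : ‖e - f‖ ≤ 1) (x y : ℝ) : ‖x • e + y • f‖ = max |x| |y| := by
  refine le_antisymm (norm_smul_add_smul_le_max hadd hsub x y) ?_
  have hdiff : ‖x • e - y • f‖ ≤ max |x| |y| := by
    simpa [sub_eq_add_neg] using norm_smul_add_smul_le_max hadd hsub x (-y)
  have hx : 2 * |x| ≤ ‖x • e + y • f‖ + ‖x • e - y • f‖ :=
    calc 2 * |x| = ‖(x • e + y • f) + (x • e - y • f)‖ := by
          rw [add_add_sub_cancel, ← two_smul ℝ, norm_smul, norm_smul, he, Real.norm_two, mul_one,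
            Real.norm_eq_abs]
      _ ≤ _ := norm_add_le _ _
  have hy : 2 * |y| ≤ ‖x • e + y • f‖ + ‖x • e - y • f‖ :=
    calc 2 * |y| = ‖(x • e + y • f) - (x • e - y • f)‖ := by
          rw [add_sub_sub_cancel, ← two_smul ℝ, norm_smul, norm_smul, hf, Real.norm_two, mul_one,
            Real.norm_eq_abs]
      _ ≤ _ := norm_sub_le _ _
  have hmax : 2 * max |x| |y| ≤ ‖x • e + y • f‖ + ‖x • e - y • f‖ := by
    rw [mul_max_of_nonneg _ _ zero_le_two]
    exact max_le hx hy
  linarith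

lemma nonempty_linearIsometryEquiv_piLp_top (hdim : finrank ℝ X = 2) {e f : X} (he : ‖e‖ = 1)
    (hf : ‖f‖ = 1) (hadd : ‖e + f‖ ≤ 1) (hsub : ‖e - f‖ ≤ 1) :
    Nonempty (X ≃ₗᵢ[ℝ] PiLp ⊤ (fun _ : Fin 2 => ℝ)) := by
  have : FiniteDimensional ℝ X := .of_finrank_pos (by omega)
  let T : (Fin 2 → ℝ) →ₗᵢ[ℝ] X :=
    { toLinearMap := Fintype.linearCombination ℝ ![e, f]
      norm_map' := fun v => by
        simp [Fintype.linearCombination_apply, norm_smul_add_smul_eq_max he hf hadd hsub,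
          Pi.norm_def, Fin.univ_succ] }
  have hfin : finrank ℝ (Fin 2 → ℝ) = finrank ℝ X := by rw [hdim, finrank_fin_fun]
  exact ⟨(T.toLinearIsometryEquiv hfin).symm.trans (PiLp.equivₗᵢ _).symm⟩

lemma nonempty_linearIsometryEquiv_of_parallelogram (hdim : finrank ℝ X = 2) {l : ℝ} (hl : 0 < l)
    {a b c d : X} (hsum : a + b = c + d) (hac : ‖a - c‖ = l) (had : ‖a - d‖ = l)
    (hab : ‖a - b‖ ≤ l) (hdc : ‖d - c‖ ≤ l) :
    Nonempty (X ≃ₗᵢ[ℝ] PiLp ⊤ (fun _ : Fin 2 => ℝ)) := by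
  have hscale : ∀ x : X, ‖l⁻¹ • x‖ = ‖x‖ / l := fun x => by
    rw [norm_smul, norm_inv, Real.norm_of_nonneg hl.le, inv_mul_eq_div]
  have hadd : (a - c) + (a - d) = a - b := by linear_combination (norm := module) hsum
  refine nonempty_linearIsometryEquiv_piLp_top hdim (e := l⁻¹ • (a - c)) (f := l⁻¹ • (a - d))
    ?_ ?_ ?_ ?_
  · rw [hscale, hac, div_self hl.ne']
  · rw [hscale, had, div_self hl.ne']
  · rwa [← smul_add, hadd, hscale, div_le_one hl]
  · rwa [← smul_sub, sub_sub_sub_cancel_left, hscale, div_le_one hl]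

lemma IsEquilateral.nonempty_linearIsometryEquiv (hdim : finrank ℝ X = 2) {S : Finset X} {l : ℝ}
    (hS : IsEquilateral (S : Set X) l) (hcard : S.card = 4) :
    Nonempty (X ≃ₗᵢ[ℝ] PiLp ⊤ (fun _ : Fin 2 => ℝ)) := by
  classical
  have : FiniteDimensional ℝ X := .of_finrank_pos (by omega)
  obtain ⟨A, hAS, hA, hsum⟩ := hS.exists_sum_eq_sum_sdiff hdim.le hcard
  have hB : (S \ A).card = 2 := by rw [Finset.card_sdiff_of_subset hAS]; omega
  obtain ⟨a, b, hab, rfl⟩ := Finset.card_eq_two.1 hA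
  obtain ⟨c, d, hcd, hB⟩ := Finset.card_eq_two.1 hB
  rw [hB, Finset.sum_pair hab, Finset.sum_pair hcd] at hsum
  have ha : a ∈ S := hAS (by simp)
  have hb : b ∈ S := hAS (by simp)
  obtain ⟨hc, hcA⟩ : c ∈ S ∧ c ∉ ({a, b} : Finset X) := Finset.mem_sdiff.1 (by simp [hB])
  obtain ⟨hd, hdA⟩ : d ∈ S ∧ d ∉ ({a, b} : Finset X) := Finset.mem_sdiff.1 (by simp [hB])
  exact nonempty_linearIsometryEquiv_of_parallelogram hdim hS.1 hsum
    (hS.2 ha hc (by rintro rfl; simp at hcA)) (hS.2 ha hd (by rintro rfl; simp at hdA))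
    (hS.2 ha hb hab).le (hS.2 hd hc hcd.symm).le

end Parallelogram

theorem equilateral_sets_in_dim_two
    (X : Type*) [NormedAddCommGroup X] [NormedSpace ℝ X]
    (hdim : finrank ℝ X = 2) :
    (∃ S : Finset X, S.card = 3 ∧
      ∃ lam : ℝ, 0 < lam ∧ ∀ x ∈ S, ∀ y ∈ S, x ≠ y → ‖x - y‖ = lam) ∧
    (¬ ∃ S : Finset X, S.card = 5 ∧
      ∃ lam : ℝ, 0 < lam ∧ ∀ x ∈ S, ∀ y ∈ S, x ≠ y → ‖x - y‖ = lam) ∧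
    ((∃ S : Finset X, S.card = 4 ∧
      ∃ lam : ℝ, 0 < lam ∧ ∀ x ∈ S, ∀ y ∈ S, x ≠ y → ‖x - y‖ = lam) ↔
      Nonempty (X ≃ₗᵢ[ℝ] PiLp ⊤ (fun _ : Fin 2 => ℝ))) := by
  classical
  have : FiniteDimensional ℝ X := .of_finrank_pos (by omega)
  refine ⟨exists_isEquilateral_card_eq_three (lt_rank_of_lt_finrank (by omega)), ?_, ?_, ?_⟩
  · rintro ⟨S, hcard, lam, hS⟩
    have hle : S.card ≤ 4 := IsEquilateral.card_le_four hdim.le hS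
    omega
  · rintro ⟨S, hcard, lam, hS⟩
    exact IsEquilateral.nonempty_linearIsometryEquiv hdim hS hcard
  · rintro ⟨T⟩
    exact exists_isEquilateral_card_eq_two_pow
      ((PiLp.equivₗᵢ _).symm.trans T.symm).toLinearIsometry
end

section
/- Let X be a real normed vector space with finrank ℝ X ≥ 3, let λ > 0, and let a, b, c ∈ X satisfy ‖a − b‖ = ‖b − c‖ = ‖a − c‖ = λ. Then there exists a point d ∈ X, distinct from a, b, c, with ‖d − a‖ = ‖d − b‖ = ‖d − c‖ = λ; that is, every equilateral set of size 3 in X extends to an equilateral set of size 4. -/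
open Module

open Metric Set Topology

/-!
Two spheres of the same radius `r` around `x` and `y` meet in a connected set as soon as the
dimension is at least three. One may assume the dimension finite. If `dist x y < 2 * r`, project
the lens `K` of the two closed balls along the line through `x` and `y`. A point of `K` lies on
both spheres exactly when its line parallel to `y - x` misses the interior of `K`, that is, when
its image lies on the frontier of the image of `K`. This frontier is homeomorphic to a sphere of
positive dimension, hence connected, and the fibres of `K` are convex, so the intersection of the
spheres is connected as well.

For an equilateral triple `a`, `b`, `c` the intersection of the spheres around `a` and `b` contains
`c` and its reflection `a + b - c`, whose distance to `c` is at least the side length. The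
intermediate value theorem yields a point of the intersection at exactly that distance from `c`.
-/

section Topology

lemma isPreconnected_inter_preimage_of_isCompact {α β : Type*} [TopologicalSpace α]
    [TopologicalSpace β] [T2Space β] {f : α → β} {K : Set α} {F : Set β} (hK : IsCompact K)
    (hf : ContinuousOn f K) (hF : IsPreconnected F) (hFK : F ⊆ f '' K)
    (hfib : ∀ y ∈ F, IsPreconnected (K ∩ f ⁻¹' {y})) : IsPreconnected (K ∩ f ⁻¹' F) := by
  have isClosed_image {A : Set α} (hA : IsClosed A) : IsClosed (f '' (K ∩ A)) :=
    ((hK.inter_right hA).image_of_continuousOn (hf.mono inter_subset_left)).isClosed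
  refine isPreconnected_closed_iff.2 fun A B hA hB hcover ⟨a, ha, haA⟩ ⟨b, hb, hbB⟩ ↦ ?_
  have image_cover : F ⊆ f '' (K ∩ A) ∪ f '' (K ∩ B) := fun y hy ↦ by
    obtain ⟨x, hxK, rfl⟩ := hFK hy
    exact (hcover ⟨hxK, hy⟩).imp (fun hx ↦ ⟨x, ⟨hxK, hx⟩, rfl⟩) fun hx ↦ ⟨x, ⟨hxK, hx⟩, rfl⟩
  obtain ⟨_, hyF, ⟨a', ⟨haK', haA'⟩, rfl⟩, ⟨b', ⟨hbK', hbB'⟩, hba⟩⟩ :=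
    isPreconnected_closed_iff.1 hF _ _ (isClosed_image hA) (isClosed_image hB) image_cover
      ⟨f a, ha.2, a, ⟨ha.1, haA⟩, rfl⟩ ⟨f b, hb.2, b, ⟨hb.1, hbB⟩, rfl⟩
  have fiber_subset : K ∩ f ⁻¹' {f a'} ⊆ K ∩ f ⁻¹' F :=
    inter_subset_inter_right K (preimage_mono (singleton_subset_iff.2 hyF))
  exact (isPreconnected_closed_iff.1 (hfib _ hyF) A B hA hB (fiber_subset.trans hcover)
    ⟨a', ⟨haK', rfl⟩, haA'⟩ ⟨b', ⟨hbK', hba⟩, hbB'⟩).mono (inter_subset_inter_left _ fiber_subset)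

lemma sphere_inter_sphere_eq_of_two_mul_le_dist {X : Type*} [PseudoMetricSpace X]
    {x y : X} {r : ℝ} (hxy : 2 * r ≤ dist x y) :
    sphere x r ∩ sphere y r = closedBall x r ∩ closedBall y r := by
  refine Subset.antisymm (inter_subset_inter sphere_subset_closedBall sphere_subset_closedBall)
    fun p ⟨hpx, hpy⟩ ↦ ?_
  simp only [mem_inter_iff, mem_closedBall, mem_sphere] at hpx hpy ⊢
  have htri := dist_triangle_left x y p
  constructor <;> linarith

end Topology

section Convex

lemma interior_image_of_isOpenMap_of_convex {E F : Type*}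
    [AddCommGroup E] [Module ℝ E] [TopologicalSpace E] [IsTopologicalAddGroup E]
    [ContinuousSMul ℝ E] [AddCommGroup F] [Module ℝ F] [TopologicalSpace F]
    [IsTopologicalAddGroup F] [ContinuousSMul ℝ F] {f : E →L[ℝ] F} (hf : IsOpenMap f)
    {s : Set E} (hs : Convex ℝ s) (hne : (interior s).Nonempty) :
    interior (f '' s) = f '' interior s := by
  refine Subset.antisymm ?_ (hf.image_interior_subset s)
  have hopen : IsOpen (f '' interior s) := hf _ isOpen_interior
  have hconv : Convex ℝ (f '' interior s) := hs.interior.linear_image f.toLinearMap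
  calc interior (f '' s) ⊆ interior (f '' closure (interior s)) := by
        rw [hs.closure_interior_eq_closure_of_nonempty_interior hne]
        exact interior_mono (image_mono subset_closure)
    _ ⊆ interior (closure (f '' interior s)) :=
        interior_mono (image_closure_subset_closure_image f.continuous)
    _ = f '' interior s := by
        rw [hconv.interior_closure_eq_interior_of_nonempty_interior
          (by rw [hopen.interior_eq]; exact hne.image f), hopen.interior_eq]

lemma isPreconnected_frontier_of_convex {E : Type*} [NormedAddCommGroup E] [NormedSpace ℝ E]
    (hrank : 1 < Module.rank ℝ E) {s : Set E} (hs : Convex ℝ s) (hne : (interior s).Nonempty)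
    (hb : Bornology.IsBounded s) : IsPreconnected (frontier s) := by
  obtain ⟨h, -, -, hfrontier⟩ :=
    exists_homeomorph_image_interior_closure_frontier_eq_unitBall hs hne hb
  rw [← h.isInducing.isPreconnected_image, hfrontier]
  exact isPreconnected_sphere hrank 0 1

end Convex

section LinearAlgebra

lemma one_lt_rank_quotient_span_singleton {K V : Type*} [DivisionRing K] [AddCommGroup V]
    [Module K V] (hrank : 2 < Module.rank K V) (v : V) :
    1 < Module.rank K (V ⧸ Submodule.span K {v}) := by
  by_contra! hle
  have hspan : Module.rank K (Submodule.span K {v}) ≤ 1 := by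
    simpa using rank_span_le (R := K) {v}
  have hsum := HasRankNullity.rank_quotient_add_rank (Submodule.span K {v})
  exact (hrank.trans_le (hsum ▸ add_le_add hle hspan)).ne one_add_one_eq_two.symm

lemma exists_finiteDimensional_submodule_of_le_rank {K V : Type*} [DivisionRing K]
    [AddCommGroup V] [Module K V] {n : ℕ} (hrank : n ≤ Module.rank K V) {s : Set V}
    (hs : s.Finite) :
    ∃ W : Submodule K V, FiniteDimensional K W ∧ s ⊆ W ∧ n ≤ Module.rank K W := by
  obtain ⟨t, rfl, ht⟩ := le_rank_iff_exists_finset.1 hrank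
  refine ⟨Submodule.span K (s ∪ t), .span_of_finite K (hs.union t.finite_toSet),
    subset_union_left.trans Submodule.subset_span, ?_⟩
  calc (t.card : Cardinal) = Module.rank K (Submodule.span K (t : Set V)) := by
        simpa using (rank_span_set ht).symm
    _ ≤ _ := Submodule.rank_mono (Submodule.span_mono subset_union_right)

lemma apply_mem_image_iff_exists_add_smul_mem {K V W : Type*} [Ring K] [AddCommGroup V]
    [Module K V] [AddCommGroup W] [Module K W] {f : V →ₗ[K] W} {v : V}
    (hker : f.ker = Submodule.span K {v}) {s : Set V} {p : V} :
    f p ∈ f '' s ↔ ∃ t : K, p + t • v ∈ s := by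
  constructor
  · rintro ⟨q, hq, hqp⟩
    have hsub : q - p ∈ f.ker := LinearMap.sub_mem_ker_iff.2 hqp
    obtain ⟨t, ht⟩ := Submodule.mem_span_singleton.1 (hker ▸ hsub)
    exact ⟨t, by rwa [ht, add_sub_cancel]⟩
  · rintro ⟨t, ht⟩
    have hv : f v = 0 := LinearMap.mem_ker.1 (hker ▸ Submodule.mem_span_singleton_self v)
    exact ⟨_, ht, by rw [map_add, map_smul, hv, smul_zero, add_zero]⟩

end LinearAlgebra

section Lens

variable {X : Type*} [SeminormedAddCommGroup X] [NormedSpace ℝ X] {x y p q : X} {r t : ℝ}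

lemma openSegment_subset_ball (hp : p ∈ closedBall x r) (hq : q ∈ ball x r) :
    openSegment ℝ p q ⊆ ball x r := by
  have hr : r ≠ 0 := (pos_of_mem_ball hq).ne'
  rw [← interior_closedBall x hr] at hq ⊢
  exact (convex_closedBall x r).openSegment_self_interior_subset_interior hp hq

lemma mem_ball_of_add_smul_mem_ball (ht : 0 < t) (hp : p ∈ closedBall y r)
    (hpt : p + t • (y - x) ∈ ball x r) : p ∈ ball x r := by
  have hp' : p - (y - x) ∈ closedBall x r := by
    rwa [mem_closedBall_iff_norm, sub_sub, sub_add_cancel, ← mem_closedBall_iff_norm]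
  refine openSegment_subset_ball hp' hpt ⟨t / (1 + t), 1 / (1 + t), by positivity, by positivity,
    by field_simp; ring, ?_⟩
  match_scalars <;> field_simp <;> ring

lemma exists_add_smul_mem_ball_inter_ball (hpx : p ∈ ball x r) (hpy : p ∈ closedBall y r) :
    ∃ t : ℝ, p + t • (y - x) ∈ ball x r ∩ ball y r := by
  have hcont : Continuous fun t : ℝ ↦ p + t • (y - x) := by fun_prop
  have hnear : ∀ᶠ t in 𝓝[>] (0 : ℝ), p + t • (y - x) ∈ ball x r :=
    nhdsWithin_le_nhds (hcont.continuousAt.eventually (isOpen_ball.mem_nhds (by simpa using hpx)))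
  obtain ⟨t, htx, ht0, ht1⟩ := (hnear.and (Ioo_mem_nhdsGT one_pos)).exists
  have hpy' : p + (y - x) ∈ ball y r := by
    simpa [dist_eq_norm, add_sub_right_comm] using hpx
  refine ⟨t, htx, openSegment_subset_ball hpy hpy' ⟨1 - t, t, by linarith, ht0, by ring, ?_⟩⟩
  module

lemma mem_sphere_inter_sphere_iff_forall_add_smul_notMem
    (hp : p ∈ closedBall x r ∩ closedBall y r) :
    p ∈ sphere x r ∩ sphere y r ↔ ∀ t : ℝ, p + t • (y - x) ∉ ball x r ∩ ball y r := by
  obtain ⟨hpx, hpy⟩ := hp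
  refine ⟨fun ⟨hx, hy⟩ t ⟨htx, hty⟩ ↦ ?_, fun hmiss ↦ ⟨?_, ?_⟩⟩
  · rcases lt_trichotomy t 0 with ht | rfl | ht
    · have hty' : p + -t • (x - y) ∈ ball y r := by rwa [neg_smul, ← smul_neg, neg_sub]
      exact (mem_ball_of_add_smul_mem_ball (neg_pos.2 ht) hpx hty').ne hy
    · exact (show p ∈ ball x r by simpa using htx).ne hx
    · exact (mem_ball_of_add_smul_mem_ball ht hpy htx).ne hx
  · refine eq_of_le_of_not_lt hpx fun hlt ↦ ?_
    obtain ⟨t, ht⟩ := exists_add_smul_mem_ball_inter_ball hlt hpy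
    exact hmiss t ht
  · refine eq_of_le_of_not_lt hpy fun hlt ↦ ?_
    obtain ⟨t, hty, htx⟩ := exists_add_smul_mem_ball_inter_ball hlt hpx
    refine hmiss (-t) ?_
    rw [neg_smul, ← smul_neg, neg_sub]
    exact ⟨htx, hty⟩

lemma interior_closedBall_inter_closedBall (hr : r ≠ 0) :
    interior (closedBall x r ∩ closedBall y r) = ball x r ∩ ball y r := by
  rw [interior_inter, interior_closedBall x hr, interior_closedBall y hr]

lemma midpoint_mem_ball_inter_ball (hxy : dist x y < 2 * r) :
    midpoint ℝ x y ∈ ball x r ∩ ball y r := by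
  simp only [mem_inter_iff, mem_ball, dist_midpoint_left, dist_midpoint_right, Real.norm_two]
  constructor <;> linarith

lemma nonempty_interior_closedBall_inter_closedBall (hxy : dist x y < 2 * r) :
    (interior (closedBall x r ∩ closedBall y r)).Nonempty := by
  have hmid := midpoint_mem_ball_inter_ball hxy
  rw [interior_closedBall_inter_closedBall (pos_of_mem_ball hmid.1).ne']
  exact ⟨_, hmid⟩

lemma sphere_inter_sphere_eq_inter_preimage_frontier {Y : Type*} [AddCommGroup Y] [Module ℝ Y]
    [TopologicalSpace Y] [IsTopologicalAddGroup Y] [ContinuousSMul ℝ Y] {f : X →L[ℝ] Y}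
    (hf : IsOpenMap f) (hker : f.ker = Submodule.span ℝ {y - x}) (hxy : dist x y < 2 * r) :
    sphere x r ∩ sphere y r = (closedBall x r ∩ closedBall y r) ∩
      f ⁻¹' frontier (f '' (closedBall x r ∩ closedBall y r)) := by
  have hr : r ≠ 0 := (pos_of_mem_ball (midpoint_mem_ball_inter_ball hxy).1).ne'
  have interior_image : interior (f '' (closedBall x r ∩ closedBall y r)) =
      f '' (ball x r ∩ ball y r) := by
    rw [interior_image_of_isOpenMap_of_convex hf
      ((convex_closedBall x r).inter (convex_closedBall y r))
      (nonempty_interior_closedBall_inter_closedBall hxy), interior_closedBall_inter_closedBall hr]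
  have mem_frontier_iff {p : X} (hp : p ∈ closedBall x r ∩ closedBall y r) :
      f p ∈ frontier (f '' (closedBall x r ∩ closedBall y r)) ↔ p ∈ sphere x r ∩ sphere y r := by
    rw [mem_sphere_inter_sphere_iff_forall_add_smul_notMem hp, ← not_exists,
      ← apply_mem_image_iff_exists_add_smul_mem (f := f.toLinearMap) hker]
    exact (and_iff_right (subset_closure (mem_image_of_mem f hp))).trans
      (not_congr (by rw [interior_image]; rfl))
  ext p
  refine ⟨fun hp ↦ ?_, fun ⟨hpK, hp⟩ ↦ (mem_frontier_iff hpK).1 hp⟩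
  have hpK := inter_subset_inter sphere_subset_closedBall sphere_subset_closedBall hp
  exact ⟨hpK, (mem_frontier_iff hpK).2 hp⟩

end Lens

section Connectedness

variable {X : Type*} [NormedAddCommGroup X] [NormedSpace ℝ X]

lemma isPreconnected_sphere_inter_sphere_of_finiteDimensional [FiniteDimensional ℝ X]
    (hrank : 3 ≤ Module.rank ℝ X) (x y : X) (r : ℝ) :
    IsPreconnected (sphere x r ∩ sphere y r) := by
  have hconv := (convex_closedBall x r).inter (convex_closedBall y r)
  rcases le_or_gt (2 * r) (dist x y) with hxy | hxy
  · rw [sphere_inter_sphere_eq_of_two_mul_le_dist hxy]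
    exact hconv.isPreconnected
  have : IsClosed (Submodule.span ℝ {y - x} : Set X) := Submodule.closed_of_finiteDimensional _
  let f : X →L[ℝ] X ⧸ Submodule.span ℝ {y - x} := (Submodule.span ℝ {y - x}).mkQL
  have hf : IsOpenMap f := (Submodule.span ℝ {y - x}).isOpenMap_mkQ
  have hker : f.ker = Submodule.span ℝ {y - x} := Submodule.ker_mkQ _
  have : ProperSpace X := FiniteDimensional.proper_real X
  have hcompact : IsCompact (closedBall x r ∩ closedBall y r) :=
    (isCompact_closedBall x r).inter_right isClosed_closedBall
  have himage : IsCompact (f '' (closedBall x r ∩ closedBall y r)) :=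
    hcompact.image f.continuous
  have hinterior : (interior (f '' (closedBall x r ∩ closedBall y r))).Nonempty :=
    ((nonempty_interior_closedBall_inter_closedBall hxy).image f).mono
      (hf.image_interior_subset _)
  rw [sphere_inter_sphere_eq_inter_preimage_frontier hf hker hxy]
  refine isPreconnected_inter_preimage_of_isCompact hcompact f.continuous.continuousOn
    (isPreconnected_frontier_of_convex
      (one_lt_rank_quotient_span_singleton (hrank.trans_lt' (by norm_num)) _)
      (hconv.linear_image f.toLinearMap) hinterior himage.isBounded)
    himage.isClosed.frontier_subset fun z _ ↦ ?_
  exact (hconv.inter ((convex_singleton z).linear_preimage f.toLinearMap)).isPreconnected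

theorem isPreconnected_sphere_inter_sphere (hrank : 3 ≤ Module.rank ℝ X) (x y : X) (r : ℝ) :
    IsPreconnected (sphere x r ∩ sphere y r) := by
  refine isPreconnected_of_forall_pair fun p hp q hq ↦ ?_
  obtain ⟨W, hWfin, hW, hWrank⟩ := exists_finiteDimensional_submodule_of_le_rank (n := 3)
    (by exact_mod_cast hrank) (toFinite {x, y, p, q})
  simp only [insert_subset_iff, singleton_subset_iff, SetLike.mem_coe] at hW
  obtain ⟨hx, hy, hpW, hqW⟩ := hW
  lift x to W using hx
  lift y to W using hy
  lift p to W using hpW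
  lift q to W using hqW
  have hconn := isPreconnected_sphere_inter_sphere_of_finiteDimensional
    (by exact_mod_cast hWrank) x y r
  refine ⟨_, ?_, mem_image_of_mem _ hp, mem_image_of_mem _ hq,
    hconn.image ((↑) : W → X) continuous_subtype_val.continuousOn⟩
  exact image_subset_iff.2 fun _ hz ↦ hz

end Connectedness

theorem equilateral_triple_extends_general {X : Type*} [NormedAddCommGroup X] [NormedSpace ℝ X]
    (hrank : 3 ≤ Module.rank ℝ X) {lam : ℝ} (hlam : 0 < lam) {a b c : X}
    (hab : ‖a - b‖ = lam) (hbc : ‖b - c‖ = lam) (hac : ‖a - c‖ = lam) :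
    ∃ d : X, d ≠ a ∧ d ≠ b ∧ d ≠ c ∧ ‖d - a‖ = lam ∧ ‖d - b‖ = lam ∧ ‖d - c‖ = lam := by
  have hconn : IsPreconnected (sphere a lam ∩ sphere b lam) :=
    isPreconnected_sphere_inter_sphere hrank a b lam
  have hc : c ∈ sphere a lam ∩ sphere b lam := by
    constructor <;> rwa [mem_sphere_iff_norm, norm_sub_rev]
  have hreflection : a + b - c ∈ sphere a lam ∩ sphere b lam := by
    constructor <;> rw [mem_sphere_iff_norm]
    · rwa [add_sub_assoc, add_sub_cancel_left]
    · rwa [add_sub_right_comm, add_sub_cancel_right]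
  have hfar : lam ≤ ‖a + b - c - c‖ := by
    have htri := norm_sub_le (a + b - c - c) (b - a)
    rw [show a + b - c - c - (b - a) = (2 : ℝ) • (a - c) by module, norm_smul, hac,
      norm_sub_rev b, hab, Real.norm_two] at htri
    linarith
  obtain ⟨d, ⟨hda, hdb⟩, hdc⟩ := hconn.intermediate_value hc hreflection
    (f := fun p ↦ ‖p - c‖) (by fun_prop) ⟨by simpa using hlam.le, hfar⟩
  rw [mem_sphere_iff_norm] at hda hdb
  have ne_of_norm {z : X} (hz : ‖d - z‖ = lam) : d ≠ z :=
    sub_ne_zero.1 (norm_pos_iff.1 (hz ▸ hlam))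
  exact ⟨d, ne_of_norm hda, ne_of_norm hdb, ne_of_norm hdc, hda, hdb, hdc⟩

theorem equilateral_triple_extends
    (X : Type*) [NormedAddCommGroup X] [NormedSpace ℝ X]
    (hdim : 3 ≤ finrank ℝ X)
    (lam : ℝ) (hlam : 0 < lam) (a b c : X)
    (hab : ‖a - b‖ = lam) (hbc : ‖b - c‖ = lam) (hac : ‖a - c‖ = lam) :
    ∃ d : X, d ≠ a ∧ d ≠ b ∧ d ≠ c ∧
      ‖d - a‖ = lam ∧ ‖d - b‖ = lam ∧ ‖d - c‖ = lam := by
  have : FiniteDimensional ℝ X := .of_finrank_pos (by lia)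
  have hrank : 3 ≤ Module.rank ℝ X := by
    rw [← finrank_eq_rank]
    exact_mod_cast hdim
  exact equilateral_triple_extends_general hrank hlam hab hbc hac
end

section
/- Let 1 < p < 2 be real, let n ≥ 1, and set k = ⌈ log((1 − 2^(p−2))⁻¹) / log 2 ⌉ − 1. Then ℓ_p^n contains an equilateral set of cardinality ⌊ 2^(k+1) · n / (2^(k+1) − 1) ⌋. -/
/-!
Let `X` have as rows the `M` sign vectors in `ℝ^(M-1)` with pairwise inner products `-1` that come
from a Hadamard matrix of order `M`. Its perturbed Sylvester doubling, with rows `(c, xᵢ, b xᵢ)`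
and `(-c, b xᵢ, -xᵢ)`, has only two kinds of `ℓ_p`-distances between rows. If
`M ≤ (1 - 2^(p-2))⁻¹ ≤ 2M`, an intermediate value argument between `b = 0` and `b = 1` produces
`b` and `c` for which both distances are `2^(1/p)` times the common norm of the rows, as for
disjointly supported vectors. Disjoint copies of these `2M` points in dimension `2M - 1`, together
with multiples of unit vectors in the remaining coordinates, therefore still form an equilateral
set; `M` is taken to be the power of two determined by `p`.
-/

open Matrix

variable {ι κ ι' κ' : Type*} [Fintype κ] [Fintype κ'] {p ρ : ℝ}

theorem sum_abs_mul_rpow (t : ℝ) (v : κ → ℝ) :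
    ∑ k, |t * v k| ^ p = |t| ^ p * ∑ k, |v k| ^ p := by
  simp only [abs_mul, Real.mul_rpow (abs_nonneg _) (abs_nonneg _), ← Finset.mul_sum]

/-- The rows of `Z` are points of `ℓ_p^κ` of norm `ρ^(1/p)` at pairwise distances `(2ρ)^(1/p)`,
which are the distances between disjointly supported vectors of that norm. Hence these families,
unlike arbitrary equilateral ones, can be placed side by side in complementary coordinates. -/
structure IsBalancedEquilateral (p ρ : ℝ) (Z : Matrix ι κ ℝ) : Prop where
  sum_rpow (i : ι) : ∑ k, |Z i k| ^ p = ρ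
  sum_sub_rpow {i j : ι} (hij : i ≠ j) : ∑ k, |Z i k - Z j k| ^ p = 2 * ρ

namespace IsBalancedEquilateral

theorem one [Fintype ι] [DecidableEq ι] (hp : p ≠ 0) :
    IsBalancedEquilateral p 1 (1 : Matrix ι ι ℝ) where
  sum_rpow i := by
    simp [Matrix.one_apply, apply_ite, ite_pow, Real.zero_rpow hp]
  sum_sub_rpow {i j} hij := by
    have hterm (k : ι) : |(1 : Matrix ι ι ℝ) i k - (1 : Matrix ι ι ℝ) j k| ^ p
        = (if i = k then 1 else 0) + if j = k then 1 else 0 := by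
      by_cases hik : i = k <;> by_cases hjk : j = k <;>
        simp_all [Matrix.one_apply, Real.zero_rpow hp]
    simp [hterm, Finset.sum_add_distrib, one_add_one_eq_two]

theorem smul {Z : Matrix ι κ ℝ} (hZ : IsBalancedEquilateral p ρ Z) (t : ℝ) :
    IsBalancedEquilateral p (|t| ^ p * ρ) (t • Z) where
  sum_rpow i := by
    simp only [Matrix.smul_apply, smul_eq_mul, sum_abs_mul_rpow, hZ.sum_rpow]
  sum_sub_rpow hij := by
    simp only [Matrix.smul_apply, smul_eq_mul, ← mul_sub, sum_abs_mul_rpow, hZ.sum_sub_rpow hij]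
    ring

theorem fromBlocks (hp : p ≠ 0) {Z : Matrix ι κ ℝ} {W : Matrix ι' κ' ℝ}
    (hZ : IsBalancedEquilateral p ρ Z) (hW : IsBalancedEquilateral p ρ W) :
    IsBalancedEquilateral p ρ (Matrix.fromBlocks Z 0 0 W) where
  sum_rpow := by
    rintro (i | i) <;> simp [hZ.sum_rpow, hW.sum_rpow, Real.zero_rpow hp]
  sum_sub_rpow := by
    rintro (i | i) (j | j) hij
    · simp [hZ.sum_sub_rpow (ne_of_apply_ne Sum.inl hij), Real.zero_rpow hp]
    · simp [hZ.sum_rpow, hW.sum_rpow, two_mul]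
    · simp [hZ.sum_rpow, hW.sum_rpow, two_mul]
    · simp [hW.sum_sub_rpow (ne_of_apply_ne Sum.inr hij), Real.zero_rpow hp]

theorem blockDiagonal {o : Type*} [Fintype o] [DecidableEq o] (hp : p ≠ 0)
    {Z : o → Matrix ι κ ℝ} (hZ : ∀ s, IsBalancedEquilateral p ρ (Z s)) :
    IsBalancedEquilateral p ρ (Matrix.blockDiagonal Z) where
  sum_rpow := by
    rintro ⟨i, s⟩
    rw [Fintype.sum_prod_type_right, Fintype.sum_eq_single s]
    · simp [(hZ s).sum_rpow]
    · intro t hts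
      simp [Matrix.blockDiagonal_apply_ne Z _ _ hts.symm, Real.zero_rpow hp]
  sum_sub_rpow := by
    rintro ⟨i, s⟩ ⟨j, t⟩ hij
    rw [Fintype.sum_prod_type_right]
    obtain rfl | hst := eq_or_ne s t
    · rw [Fintype.sum_eq_single s]
      · simp [(hZ s).sum_sub_rpow (ne_of_apply_ne (·, s) hij)]
      · intro t hts
        simp [Matrix.blockDiagonal_apply_ne Z _ _ hts.symm, Real.zero_rpow hp]
    · rw [Fintype.sum_eq_add s t hst]
      · simp [Matrix.blockDiagonal_apply_ne Z _ _ hst, Matrix.blockDiagonal_apply_ne Z _ _ hst.symm,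
          (hZ s).sum_rpow, (hZ t).sum_rpow, two_mul]
      · rintro u ⟨hus, hut⟩
        simp [Matrix.blockDiagonal_apply_ne Z _ _ hus.symm,
          Matrix.blockDiagonal_apply_ne Z _ _ hut.symm, Real.zero_rpow hp]

end IsBalancedEquilateral

/-- `ℓ_p^n` contains an equilateral set of `N` points. -/
def HasEquilateralSet (p : ℝ) (n N : ℕ) : Prop :=
  ∃ S : Finset (PiLp (ENNReal.ofReal p) (fun _ : Fin n => ℝ)), S.card = N ∧
    ∃ lam : ℝ, 0 < lam ∧ ∀ x ∈ S, ∀ y ∈ S, x ≠ y → ‖x - y‖ = lam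

namespace IsBalancedEquilateral

theorem norm_toLp_sub {Z : Matrix ι κ ℝ} (hZ : IsBalancedEquilateral p ρ Z) (hp : 0 < p)
    {i j : ι} (hij : i ≠ j) :
    ‖WithLp.toLp (ENNReal.ofReal p) (Z i) - WithLp.toLp (ENNReal.ofReal p) (Z j)‖
      = (2 * ρ) ^ (1 / p) := by
  have hp' : (ENNReal.ofReal p).toReal = p := ENNReal.toReal_ofReal hp.le
  rw [PiLp.norm_eq_sum (by rwa [hp']), hp', ← hZ.sum_sub_rpow hij]
  simp

theorem submatrix_equiv {Z : Matrix ι κ ℝ} (hZ : IsBalancedEquilateral p ρ Z) (e : κ' ≃ κ) :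
    IsBalancedEquilateral p ρ (Z.submatrix id e) where
  sum_rpow i := (e.sum_comp fun k => |Z i k| ^ p).trans (hZ.sum_rpow i)
  sum_sub_rpow {i j} hij :=
    (e.sum_comp fun k => |Z i k - Z j k| ^ p).trans (hZ.sum_sub_rpow hij)

theorem hasEquilateralSet [Fintype ι] {Z : Matrix ι κ ℝ} (hZ : IsBalancedEquilateral p ρ Z)
    (hp : 0 < p) (hρ : 0 < ρ) :
    HasEquilateralSet p (Fintype.card κ) (Fintype.card ι) := by
  classical
  obtain ⟨W, hW⟩ : ∃ W : Matrix ι (Fin (Fintype.card κ)) ℝ, IsBalancedEquilateral p ρ W :=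
    ⟨_, hZ.submatrix_equiv (Fintype.equivFin κ).symm⟩
  let point (i : ι) : PiLp (ENNReal.ofReal p) (fun _ : Fin (Fintype.card κ) => ℝ) :=
    WithLp.toLp _ (W i)
  have point_injective : Function.Injective point := by
    intro i j h
    by_contra hij
    have hsum := hW.sum_sub_rpow hij
    rw [show W i = W j from congrArg WithLp.ofLp h] at hsum
    simp [Real.zero_rpow hp.ne', hρ.ne'] at hsum
  refine ⟨Finset.univ.image point, ?_, (2 * ρ) ^ (1 / p), by positivity, ?_⟩
  · rw [Finset.card_image_of_injective _ point_injective, Finset.card_univ]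
  · simp only [Finset.mem_image, Finset.mem_univ, true_and]
    rintro _ ⟨i, rfl⟩ _ ⟨j, rfl⟩ hij
    exact hW.norm_toLp_sub hp (ne_of_apply_ne point hij)

theorem hasEquilateralSet_div_add_mod [Fintype ι] {Z : Matrix ι κ ℝ}
    (hZ : IsBalancedEquilateral p ρ Z) (hp : 0 < p) (hρ : 0 < ρ) (n : ℕ) :
    HasEquilateralSet p n
      (n / Fintype.card κ * Fintype.card ι + n % Fintype.card κ) := by
  have hcopies := blockDiagonal hp.ne' fun _ : Fin (n / Fintype.card κ) => hZ
  have hunits := (one (ι := Fin (n % Fintype.card κ)) hp.ne').smul (ρ ^ p⁻¹)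
  rw [abs_of_pos (by positivity), Real.rpow_inv_rpow hρ.le hp.ne', mul_one] at hunits
  simpa [mul_comm _ (n / _), Nat.div_add_mod'] using
    (hcopies.fromBlocks hp.ne' hunits).hasEquilateralSet hp hρ

end IsBalancedEquilateral

/-- The rows of `X` are sign vectors with pairwise inner products `-1`. If there are `card κ + 1`
rows, they are the vertices of a regular simplex inscribed in the cube, i.e. the core of a
normalized Hadamard matrix. -/
structure IsSignSimplex (X : Matrix ι κ ℝ) : Prop where
  abs_eq_one (i : ι) (k : κ) : |X i k| = 1
  sum_mul {i j : ι} (hij : i ≠ j) : ∑ k, X i k * X j k = -1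

/-- The rows of a Hadamard matrix `H`, normalized so that their entries in column `k₀` are `1`, and
with that column removed. -/
def hadamardCore (H : Matrix ι ι ℝ) (k₀ : ι) : Matrix ι {k // k ≠ k₀} ℝ :=
  of fun i k => H i k₀ * H i k

theorem isSignSimplex_hadamardCore [Fintype ι] [DecidableEq ι] {H : Matrix ι ι ℝ}
    (hH : H.IsHadamard) (k₀ : ι) : IsSignSimplex (hadamardCore H k₀) := by
  have habs (i k : ι) : |H i k| = 1 := by
    simpa using CStarRing.norm_of_mem_unitary (hH.apply_mem i k)
  have hsq (i k : ι) : H i k * H i k = 1 := by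
    rw [← abs_mul_abs_self, habs, one_mul]
  refine ⟨fun i k => by simp [hadamardCore, abs_mul, habs], fun {i j} hij => ?_⟩
  have horth : ∑ k, H i k * H j k = 0 := by
    simpa [Matrix.mul_apply, hij] using congr_fun₂ hH.mul_conjTranspose i j
  rw [Fintype.sum_eq_add_sum_subtype_ne _ k₀] at horth
  calc ∑ k : {k // k ≠ k₀}, H i k₀ * H i k * (H j k₀ * H j k)
      = H i k₀ * H j k₀ * ∑ k : {k // k ≠ k₀}, H i k * H j k := by
        rw [Finset.mul_sum]
        exact Finset.sum_congr rfl fun k _ => by ring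
    _ = -((H i k₀ * H i k₀) * (H j k₀ * H j k₀)) := by
        rw [eq_neg_of_add_eq_zero_right horth]
        ring
    _ = -1 := by rw [hsq, hsq, one_mul]

theorem isHadamard_two : (!![1, 1; 1, -1] : Matrix (Fin 2) (Fin 2) ℝ).IsHadamard := by
  simp only [isHadamard_iff, Unitary.mem_iff, ← Matrix.ext_iff, Fin.forall_fin_two,
    Matrix.mul_apply, Fin.sum_univ_two]
  norm_num

theorem exists_isHadamard_two_pow (m : ℕ) :
    ∃ H : Matrix (Fin (2 ^ m)) (Fin (2 ^ m)) ℝ, H.IsHadamard := by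
  induction m with
  | zero => exact ⟨1, by simp [isHadamard_iff]⟩
  | succ m ih =>
    obtain ⟨H, hH⟩ := ih
    exact ⟨_, (hH.kronecker isHadamard_two).reindex finProdFinEquiv finProdFinEquiv⟩

namespace IsSignSimplex

variable {X : Matrix ι κ ℝ}

theorem eq_or_eq_neg (hX : IsSignSimplex X) (i j : ι) (k : κ) : X j k = X i k ∨ X j k = -X i k :=
  abs_eq_abs.1 ((hX.abs_eq_one j k).trans (hX.abs_eq_one i k).symm)

theorem sum_rpow (hX : IsSignSimplex X) (i : ι) : ∑ k, |X i k| ^ p = Fintype.card κ := by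
  simp [hX.abs_eq_one]

theorem sum_sub_rpow (hX : IsSignSimplex X) (hp : p ≠ 0) {i j : ι} (hij : i ≠ j) :
    ∑ k, |X i k - X j k| ^ p = 2 ^ (p - 1) * (Fintype.card κ + 1) := by
  have hterm (k : κ) : |X i k - X j k| ^ p = 2 ^ (p - 1) * (1 - X i k * X j k) := by
    have hsq : X i k * X i k = 1 := by rw [← abs_mul_abs_self, hX.abs_eq_one, one_mul]
    rcases hX.eq_or_eq_neg i j k with h | h
    · simp [h, hsq, Real.zero_rpow hp]
    · rw [h, sub_neg_eq_add, ← two_mul, abs_mul, hX.abs_eq_one, mul_neg, hsq,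
        Real.rpow_sub_one two_ne_zero]
      norm_num
  simp [hterm, ← Finset.mul_sum, Finset.sum_sub_distrib, hX.sum_mul hij]

theorem sum_sub_mul_rpow_add_sum_mul_add_rpow (hX : IsSignSimplex X) (b : ℝ) (i j : ι) :
    ∑ k, |X i k - b * X j k| ^ p + ∑ k, |b * X i k + X j k| ^ p
      = Fintype.card κ * (|1 - b| ^ p + |1 + b| ^ p) := by
  have habs (t : ℝ) (k : κ) : |t * X i k| = |t| := by rw [abs_mul, hX.abs_eq_one, mul_one]
  have hterm (k : κ) : |X i k - b * X j k| ^ p + |b * X i k + X j k| ^ p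
      = |1 - b| ^ p + |1 + b| ^ p := by
    rcases hX.eq_or_eq_neg i j k with h | h
    · rw [h, ← one_sub_mul, ← add_one_mul, habs, habs, add_comm b]
    · rw [h, mul_neg, sub_neg_eq_add, ← one_add_mul, ← sub_eq_add_neg, ← sub_one_mul, habs, habs,
        abs_sub_comm b, add_comm]
  simp only [← Finset.sum_add_distrib, hterm, Finset.sum_const, Finset.card_univ, nsmul_eq_mul]

end IsSignSimplex

/-- The perturbed Sylvester doubling of `X`, whose rows are `(c, x, b • x)` and `(-c, b • x, -x)`
for the rows `x` of `X`. For `b = c = 1` it is Sylvester's doubling of a Hadamard matrix with its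
constant column removed. -/
def perturbedDoubling (b c : ℝ) (X : Matrix ι κ ℝ) : Matrix (ι ⊕ ι) (Unit ⊕ (κ ⊕ κ)) ℝ :=
  fromCols (replicateCol Unit (Sum.elim (fun _ => c) fun _ => -c))
    (fromBlocks X (b • X) (b • X) (-X))

theorem sum_unit_sum_sum (f : Unit ⊕ (κ ⊕ κ') → ℝ) :
    ∑ k, f k = f (.inl ()) + (∑ k, f (.inr (.inl k)) + ∑ k, f (.inr (.inr k))) := by
  simp

namespace IsSignSimplex

variable {X : Matrix ι κ ℝ}

theorem sum_rpow_perturbedDoubling (hX : IsSignSimplex X) (b c : ℝ) (i : ι ⊕ ι) :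
    ∑ k, |perturbedDoubling b c X i k| ^ p = |c| ^ p + Fintype.card κ * (1 + |b| ^ p) := by
  rcases i with i | i
  · calc _ = |c| ^ p + (∑ k, |X i k| ^ p + ∑ k, |b * X i k| ^ p) := sum_unit_sum_sum _
      _ = _ := by rw [sum_abs_mul_rpow, hX.sum_rpow]; ring
  · calc _ = |-c| ^ p + (∑ k, |b * X i k| ^ p + ∑ k, |-X i k| ^ p) := sum_unit_sum_sum _
      _ = _ := by simp only [abs_neg, sum_abs_mul_rpow, hX.sum_rpow]; ring

theorem sum_sub_rpow_perturbedDoubling_inl_inl (hX : IsSignSimplex X) (hp : p ≠ 0) (b c : ℝ)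
    {i j : ι} (hij : i ≠ j) :
    ∑ k, |perturbedDoubling b c X (.inl i) k - perturbedDoubling b c X (.inl j) k| ^ p
      = 2 ^ (p - 1) * (Fintype.card κ + 1) * (1 + |b| ^ p) :=
  calc _ = |c - c| ^ p + (∑ k, |X i k - X j k| ^ p + ∑ k, |b * X i k - b * X j k| ^ p) :=
        sum_unit_sum_sum _
    _ = _ := by
        simp only [sub_self, abs_zero, Real.zero_rpow hp, ← mul_sub, sum_abs_mul_rpow,
          hX.sum_sub_rpow hp hij]
        ring

theorem sum_sub_rpow_perturbedDoubling_inr_inr (hX : IsSignSimplex X) (hp : p ≠ 0) (b c : ℝ)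
    {i j : ι} (hij : i ≠ j) :
    ∑ k, |perturbedDoubling b c X (.inr i) k - perturbedDoubling b c X (.inr j) k| ^ p
      = 2 ^ (p - 1) * (Fintype.card κ + 1) * (1 + |b| ^ p) :=
  calc _ = |-c - -c| ^ p + (∑ k, |b * X i k - b * X j k| ^ p + ∑ k, |-X i k - -X j k| ^ p) :=
        sum_unit_sum_sum _
    _ = _ := by
        simp only [sub_self, abs_zero, Real.zero_rpow hp, ← mul_sub, sum_abs_mul_rpow,
          neg_sub_neg, hX.sum_sub_rpow hp hij, hX.sum_sub_rpow hp hij.symm]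
        ring

theorem sum_sub_rpow_perturbedDoubling_inl_inr (hX : IsSignSimplex X) (b c : ℝ) (i j : ι) :
    ∑ k, |perturbedDoubling b c X (.inl i) k - perturbedDoubling b c X (.inr j) k| ^ p
      = 2 ^ p * |c| ^ p + Fintype.card κ * (|1 - b| ^ p + |1 + b| ^ p) :=
  calc _ = |c - -c| ^ p + (∑ k, |X i k - b * X j k| ^ p + ∑ k, |b * X i k - -X j k| ^ p) :=
        sum_unit_sum_sum _
    _ = _ := by
        simp only [sub_neg_eq_add]
        rw [hX.sum_sub_mul_rpow_add_sum_mul_add_rpow, ← two_mul, abs_mul, abs_two,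
          Real.mul_rpow zero_le_two (abs_nonneg c)]

theorem isBalancedEquilateral_perturbedDoubling (hX : IsSignSimplex X) (hp : p ≠ 0) {b c : ℝ}
    (hnorm : |c| ^ p + Fintype.card κ * (1 + |b| ^ p) = ρ)
    (hsame : 2 ^ (p - 1) * (Fintype.card κ + 1) * (1 + |b| ^ p) = 2 * ρ)
    (hopp : 2 ^ p * |c| ^ p + Fintype.card κ * (|1 - b| ^ p + |1 + b| ^ p) = 2 * ρ) :
    IsBalancedEquilateral p ρ (perturbedDoubling b c X) where
  sum_rpow i := (hX.sum_rpow_perturbedDoubling b c i).trans hnorm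
  sum_sub_rpow := by
    rintro (i | i) (j | j) hij
    · rw [hX.sum_sub_rpow_perturbedDoubling_inl_inl hp b c (ne_of_apply_ne Sum.inl hij), hsame]
    · rw [hX.sum_sub_rpow_perturbedDoubling_inl_inr, hopp]
    · simp only [abs_sub_comm (perturbedDoubling b c X (.inr i) _)]
      rw [hX.sum_sub_rpow_perturbedDoubling_inl_inr, hopp]
    · rw [hX.sum_sub_rpow_perturbedDoubling_inr_inr hp b c (ne_of_apply_ne Sum.inr hij), hsame]

end IsSignSimplex

theorem exists_doubling_ratio {w N : ℝ} (hp : 1 ≤ p) (hw0 : 0 ≤ w) (hw_half : w ≤ 1 / 2)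
    (hw : 2 ^ (p - 2) * (N + 1) = N + w) :
    ∃ b : ℝ, 2 ^ p * ((1 + |b| ^ p) * w) + N * (|1 - b| ^ p + |1 + b| ^ p)
      = 2 * (2 ^ (p - 2) * (N + 1) * (1 + |b| ^ p)) := by
  have hp0 : 0 < p := by linarith
  have hcont {g : ℝ → ℝ} (hg : Continuous g) : Continuous fun b => |g b| ^ p :=
    hg.abs.rpow_const fun _ => Or.inr hp0.le
  have h_add : Continuous fun b : ℝ => |1 + b| ^ p := hcont (by fun_prop)
  refine intermediate_value_univ₂ (a := 1) (b := 0) (by fun_prop) (by fun_prop) ?_ ?_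
  · have hpow : (2 : ℝ) ^ p = 4 * 2 ^ (p - 2) := by
      rw [Real.rpow_sub two_pos, Real.rpow_two]
      ring
    have h : (2 : ℝ) ^ p * (2 * w + N) ≤ 2 ^ p * (N + 1) :=
      mul_le_mul_of_nonneg_left (by linarith) (by positivity)
    simp only [abs_one, Real.one_rpow, sub_self, abs_zero, Real.zero_rpow hp0.ne', zero_add,
      one_add_one_eq_two, abs_two]
    linarith [congrArg (· * (N + 1)) hpow]
  · have h : 2 * w ≤ 2 ^ p * w := by
      gcongr
      exact Real.self_le_rpow_of_one_le one_le_two hp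
    simp only [abs_zero, Real.zero_rpow hp0.ne', add_zero, sub_zero, abs_one, Real.one_rpow]
    linarith

theorem exists_doubling_parameters {N : ℝ} (hp : 1 ≤ p) (hN : 0 ≤ N)
    (hlo : N + 1 ≤ (1 - 2 ^ (p - 2))⁻¹) (hhi : (1 - 2 ^ (p - 2))⁻¹ ≤ 2 * (N + 1)) :
    ∃ b c ρ : ℝ, 0 < ρ ∧ |c| ^ p + N * (1 + |b| ^ p) = ρ ∧
      2 ^ (p - 1) * (N + 1) * (1 + |b| ^ p) = 2 * ρ ∧
      2 ^ p * |c| ^ p + N * (|1 - b| ^ p + |1 + b| ^ p) = 2 * ρ := by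
  have hp0 : 0 < p := by linarith
  have hp_sub_one : (2 : ℝ) ^ (p - 1) = 2 * 2 ^ (p - 2) := by
    rw [Real.rpow_sub two_pos, Real.rpow_sub two_pos, Real.rpow_one, Real.rpow_two]
    ring
  have hinv : 0 < (1 - (2 : ℝ) ^ (p - 2))⁻¹ := by linarith
  have hpos : 0 < 1 - (2 : ℝ) ^ (p - 2) := inv_pos.1 hinv
  obtain ⟨w, hw⟩ : ∃ w, 2 ^ (p - 2) * (N + 1) = N + w :=
    ⟨2 ^ (p - 2) * (N + 1) - N, by ring⟩
  have hw0 : 0 ≤ w := by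
    have := (le_inv_mul_iff₀ hpos).1 (hlo.trans_eq (mul_one _).symm)
    linarith
  have hw_half : w ≤ 1 / 2 := by
    have := (inv_le_iff_one_le_mul₀' hpos).1 hhi
    linarith
  obtain ⟨b, hb⟩ := exists_doubling_ratio hp hw0 hw_half hw
  have hcp : |((1 + |b| ^ p) * w) ^ p⁻¹| ^ p = (1 + |b| ^ p) * w := by
    rw [abs_of_nonneg (by positivity), Real.rpow_inv_rpow (by positivity) hp0.ne']
  refine ⟨b, ((1 + |b| ^ p) * w) ^ p⁻¹, 2 ^ (p - 2) * (N + 1) * (1 + |b| ^ p), by positivity,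
    ?_, ?_, ?_⟩
  · rw [hcp, hw]
    ring
  · rw [hp_sub_one]
    ring
  · rw [hcp, hb]

theorem hasEquilateralSet_of_isHadamard [Fintype ι] [DecidableEq ι] [Nonempty ι]
    {H : Matrix ι ι ℝ} (hH : H.IsHadamard) (hp : 1 ≤ p)
    (hlo : Fintype.card ι ≤ (1 - (2 : ℝ) ^ (p - 2))⁻¹)
    (hhi : (1 - (2 : ℝ) ^ (p - 2))⁻¹ ≤ 2 * Fintype.card ι) (n : ℕ) :
    HasEquilateralSet p n (n + n / (2 * Fintype.card ι - 1)) := by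
  have hp0 : 0 < p := by linarith
  obtain ⟨k₀⟩ := ‹Nonempty ι›
  obtain ⟨N, hN⟩ : ∃ N, N = Fintype.card {k // k ≠ k₀} := ⟨_, rfl⟩
  have hcard : Fintype.card ι = N + 1 := by
    rw [hN, ← Fintype.card_option]
    exact Fintype.card_congr (Equiv.optionSubtypeNe k₀).symm
  rw [hcard, Nat.cast_add_one] at hlo hhi
  obtain ⟨b, c, ρ, hρ, hnorm, hsame, hopp⟩ := exists_doubling_parameters hp N.cast_nonneg hlo hhi
  rw [hN] at hnorm hsame hopp
  have hdoubling := (isSignSimplex_hadamardCore hH k₀).isBalancedEquilateral_perturbedDoubling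
    hp0.ne' hnorm hsame hopp
  have hrows : Fintype.card (ι ⊕ ι) = 2 * N + 2 := by
    rw [Fintype.card_sum, hcard]
    ring
  have hcols : Fintype.card (Unit ⊕ ({k // k ≠ k₀} ⊕ {k // k ≠ k₀})) = 2 * N + 1 := by
    rw [Fintype.card_sum, Fintype.card_sum, Fintype.card_unit, ← hN]
    ring
  have hset := hdoubling.hasEquilateralSet_div_add_mod hp0 hρ n
  rw [hcard, show 2 * (N + 1) - 1 = 2 * N + 1 by omega]
  have hcount : n / (2 * N + 1) * (2 * N + 2) + n % (2 * N + 1) = n + n / (2 * N + 1) := by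
    linarith [Nat.div_add_mod' n (2 * N + 1)]
  rwa [hrows, hcols, hcount] at hset

theorem exists_ceil_logb_eq_natCast_add_one {b y : ℝ} (hb : 1 < b) (hy : 1 < y) :
    ∃ m : ℕ, ⌈Real.logb b y⌉ = m + 1 ∧ b ^ m ≤ y ∧ y ≤ b ^ (m + 1) := by
  obtain ⟨m, hm⟩ := Int.eq_succ_of_zero_lt (Int.ceil_pos.2 (Real.logb_pos hb hy))
  obtain ⟨hlo, hhi⟩ := Int.ceil_eq_iff.1 hm
  have hy0 : 0 < y := one_pos.trans hy
  refine ⟨m, hm, ?_, ?_⟩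
  · rw [← Real.rpow_natCast, ← Real.le_logb_iff_rpow_le hb hy0]
    simpa using hlo.le
  · rw [← Real.rpow_natCast, ← Real.logb_le_iff_le_rpow hb hy0]
    simpa using hhi

theorem floor_mul_div_sub_one {K : Type*} [Field K] [LinearOrder K] [IsStrictOrderedRing K]
    [FloorRing K] {M : ℕ} (hM : 1 < M) (n : ℕ) :
    ⌊(M : K) * n / (M - 1)⌋ = ((n + n / (M - 1) : ℕ) : ℤ) := by
  have hM' : 0 < M - 1 := Nat.sub_pos_of_lt hM
  calc ⌊(M : K) * n / (M - 1)⌋ = ⌊((M * n : ℕ) : K) / (M - 1 : ℕ)⌋ := by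
        rw [Nat.cast_mul, Nat.cast_pred (by omega)]
    _ = ((M * n / (M - 1) : ℕ) : ℤ) := by
        rw [Int.floor_div_natCast, Int.floor_natCast, Int.natCast_div]
    _ = ((n + n / (M - 1) : ℕ) : ℤ) := by
        rw [← Nat.mul_add_div hM', ← Nat.succ_mul, Nat.succ_eq_add_one, Nat.sub_add_cancel hM.le]

theorem lp_lower_bound_equilateral_general
    (p : ℝ) (hp1 : 1 ≤ p) (hp2 : p < 2) (n : ℕ) :
    ∃ S : Finset (PiLp (ENNReal.ofReal p) (fun _ : Fin n => ℝ)),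
      (S.card : ℤ) =
        ⌊(2 : ℝ) ^ (⌈Real.log (1 - 2 ^ (p - 2))⁻¹ / Real.log 2⌉ - 1 + 1) * n /
          ((2 : ℝ) ^ (⌈Real.log (1 - 2 ^ (p - 2))⁻¹ / Real.log 2⌉ - 1 + 1) - 1)⌋ ∧
      ∃ lam : ℝ, 0 < lam ∧ ∀ x ∈ S, ∀ y ∈ S, x ≠ y → ‖x - y‖ = lam := by
  have hA0 : 0 < (2 : ℝ) ^ (p - 2) := by positivity
  have hA1 : (2 : ℝ) ^ (p - 2) < 1 :=
    Real.rpow_lt_one_of_one_lt_of_neg one_lt_two (by linarith)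
  have hy : 1 < (1 - (2 : ℝ) ^ (p - 2))⁻¹ := (one_lt_inv₀ (by linarith)).2 (by linarith)
  obtain ⟨m, hceil, hlo, hhi⟩ := exists_ceil_logb_eq_natCast_add_one one_lt_two hy
  obtain ⟨H, hH⟩ := exists_isHadamard_two_pow m
  obtain ⟨S, hS, hdist⟩ := hasEquilateralSet_of_isHadamard hH hp1
    (by simpa using hlo) (by simpa [pow_succ'] using hhi) n
  refine ⟨S, ?_, hdist⟩
  have hpow : (2 : ℝ) ^ ((m : ℤ) + 1) = (2 ^ (m + 1) : ℕ) := by norm_cast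
  rw [Real.log_div_log, hceil, sub_add_cancel, hpow,
    floor_mul_div_sub_one (Nat.one_lt_two_pow m.succ_ne_zero), hS, Fintype.card_fin, pow_succ']

theorem lp_lower_bound_equilateral
    (p : ℝ) (hp1 : 1 < p) (hp2 : p < 2) (n : ℕ) (hn : 1 ≤ n) :
    ∃ S : Finset (PiLp (ENNReal.ofReal p) (fun _ : Fin n => ℝ)),
      (S.card : ℤ) =
        ⌊(2 : ℝ) ^ (⌈Real.log (1 - 2 ^ (p - 2))⁻¹ / Real.log 2⌉ - 1 + 1) * n /
          ((2 : ℝ) ^ (⌈Real.log (1 - 2 ^ (p - 2))⁻¹ / Real.log 2⌉ - 1 + 1) - 1)⌋ ∧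
      ∃ lam : ℝ, 0 < lam ∧ ∀ x ∈ S, ∀ y ∈ S, x ≠ y → ‖x - y‖ = lam :=
  lp_lower_bound_equilateral_general p hp1.le hp2 n
end

section
/- Let p_0, p_1, …, p_n be points of Euclidean space ℝ^n. If the points p_0, …, p_n are affinely independent, then the Cayley–Menger determinant CM(p_0, …, p_n) has sign (−1)^(n+1), i.e. (−1)^(n+1) · CM(p_0, …, p_n) > 0. Moreover, if the points are affinely dependent, then CM(p_0, …, p_n) = 0. -/
/-- The Cayley–Menger matrix of points `p 0, …, p m` in a Euclidean space:
entries are squared distances, bordered by a row and column of ones with a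
zero in the corner. -/
noncomputable def cayleyMengerMatrix {m n : ℕ}
    (p : Fin (m + 1) → EuclideanSpace ℝ (Fin n)) :
    Matrix (Option (Fin (m + 1))) (Option (Fin (m + 1))) ℝ :=
  fun i j =>
    match i, j with
    | some i, some j => ‖p i - p j‖ ^ 2
    | some _, none => 1
    | none, some _ => 1
    | none, none => 0

/-!
Taking the Schur complement of the 2 × 2 block spanned by the border and a base point `i₀` turns the
bordered determinant of any matrix `A` into minus the determinant of the matrix with entries
`A i j - A i i₀ - A i₀ j + A i₀ i₀`, for `i` and `j` different from `i₀`. When `A` consists of the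
squared distances between points, polarization identifies these entries with
`-2 ⟪p i - p i₀, p j - p i₀⟫`, so the Cayley–Menger determinant is a signed power of two times the
Gram determinant of the vectors `p i - p i₀`. That determinant is positive when these vectors are
linearly independent and zero otherwise.
-/

open Matrix

section Border

variable {ι R : Type*}

/-- The matrix `A` bordered by a row and a column of ones with a zero in the corner, as in the
Cayley–Menger determinant. The added index is `none`. -/
def onesBorder [Zero R] [One R] (A : Matrix ι ι R) : Matrix (Option ι) (Option ι) R
  | some i, some j => A i j
  | some _, none => 1
  | none, some _ => 1
  | none, none => 0

theorem bijective_sumElim_some_pair_none (i₀ : ι) :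
    Function.Bijective
      (Sum.elim (fun i : {i // i ≠ i₀} ↦ some (i : ι)) ![some i₀, none]) := by
  constructor
  · rintro (i | a) (j | b) h
    · simpa [Subtype.ext_iff] using h
    · fin_cases b <;> simp [i.2] at h
    · fin_cases a <;> simp [j.2.symm] at h
    · fin_cases a <;> fin_cases b <;> simp_all
  · rintro (_ | i)
    · exact ⟨.inr 1, rfl⟩
    · by_cases hi : i = i₀
      · exact ⟨.inr 0, by simp [hi]⟩
      · exact ⟨.inl ⟨i, hi⟩, rfl⟩

/-- The index equivalence that splits a bordered matrix into blocks: `.inr 0` is the base point `i₀`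
and `.inr 1` is the border. -/
noncomputable def subtypeNeSumFinTwoEquivOption (i₀ : ι) : {i // i ≠ i₀} ⊕ Fin 2 ≃ Option ι :=
  .ofBijective _ (bijective_sumElim_some_pair_none i₀)

theorem onesBorder_submatrix_eq_fromBlocks [Zero R] [One R] (A : Matrix ι ι R) (i₀ : ι) :
    (onesBorder A).submatrix (subtypeNeSumFinTwoEquivOption i₀) (subtypeNeSumFinTwoEquivOption i₀) =
      fromBlocks (A.submatrix Subtype.val Subtype.val) (of fun i ↦ ![A i.1 i₀, 1])
        (of ![fun j ↦ A i₀ j.1, 1]) !![A i₀ i₀, 1; 1, 0] := by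
  ext (i | a) (j | b)
  · rfl
  · fin_cases b <;> rfl
  · fin_cases a <;> rfl
  · fin_cases a <;> fin_cases b <;> rfl

theorem det_onesBorder [CommRing R] [Fintype ι] [DecidableEq ι] (A : Matrix ι ι R) (i₀ : ι) :
    (onesBorder A).det =
      -(of fun i j : {i // i ≠ i₀} ↦ A i j - A i i₀ - A i₀ j + A i₀ i₀).det := by
  let pivot : Matrix (Fin 2) (Fin 2) R := !![A i₀ i₀, 1; 1, 0]
  let _ : Invertible pivot :=
    { invOf := !![0, 1; 1, -A i₀ i₀]
      invOf_mul_self := by simp [pivot, one_fin_two]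
      mul_invOf_self := by simp [pivot, one_fin_two] }
  have pivot_inv : ⅟pivot = !![0, 1; 1, -A i₀ i₀] := rfl
  have det_pivot : pivot.det = -1 := by simp [pivot, det_fin_two_of]
  have schur :
      A.submatrix Subtype.val Subtype.val -
          (of fun i : {i // i ≠ i₀} ↦ ![A i i₀, 1]) * ⅟pivot *
            (of ![fun j : {i // i ≠ i₀} ↦ A i₀ j, 1]) =
        of fun i j : {i // i ≠ i₀} ↦ A i j - A i i₀ - A i₀ j + A i₀ i₀ := by
    ext i j
    simp only [pivot_inv, Matrix.sub_apply, submatrix_apply, mul_apply, of_apply, cons_val',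
      cons_val_fin_one, Fin.sum_univ_two, cons_val_zero, cons_val_one, Pi.one_apply]
    ring
  rw [← det_submatrix_equiv_self (subtypeNeSumFinTwoEquivOption i₀),
    onesBorder_submatrix_eq_fromBlocks, det_fromBlocks₂₂ _ _ _ pivot, schur, det_pivot, neg_one_mul]

end Border

section SquaredDistances

variable {ι P V : Type*}

/-- The matrix of squared distances between the points `p i`; its `onesBorder` is their
Cayley–Menger matrix. -/
def sqDistMatrix [Dist P] (p : ι → P) : Matrix ι ι ℝ :=
  of fun i j ↦ dist (p i) (p j) ^ 2

theorem dist_sq_sub_dist_sq_sub_dist_sq [SeminormedAddCommGroup V] [InnerProductSpace ℝ V]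
    [PseudoMetricSpace P] [NormedAddTorsor V P] (a b c : P) :
    dist a b ^ 2 - dist a c ^ 2 - dist c b ^ 2 = -2 * inner ℝ (a -ᵥ c) (b -ᵥ c) := by
  rw [dist_comm c b, dist_eq_norm_vsub V a b, dist_eq_norm_vsub V a c, dist_eq_norm_vsub V b c,
    ← vsub_sub_vsub_cancel_right a b c, norm_sub_sq_real]
  ring

variable [Fintype ι] [DecidableEq ι]

theorem det_onesBorder_sqDistMatrix [SeminormedAddCommGroup V] [InnerProductSpace ℝ V]
    [PseudoMetricSpace P] [NormedAddTorsor V P] (p : ι → P) (i₀ : ι) :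
    (onesBorder (sqDistMatrix p)).det =
      (-1) ^ Fintype.card ι * 2 ^ (Fintype.card ι - 1) *
        (gram ℝ fun i : {i // i ≠ i₀} ↦ p i -ᵥ p i₀).det := by
  have reduced_eq_gram :
      (of fun i j : {i // i ≠ i₀} ↦ sqDistMatrix p i j - sqDistMatrix p i i₀ -
          sqDistMatrix p i₀ j + sqDistMatrix p i₀ i₀) =
        (-2 : ℝ) • gram ℝ fun i : {i // i ≠ i₀} ↦ p i -ᵥ p i₀ := by
    ext i j
    simp [sqDistMatrix, dist_sq_sub_dist_sq_sub_dist_sq (V := V)]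
  have card_eq : Fintype.card ι = Fintype.card {i // i ≠ i₀} + 1 := by
    rw [← Fintype.card_option, Fintype.card_congr (Equiv.optionSubtypeNe i₀)]
  rw [det_onesBorder _ i₀, reduced_eq_gram, det_smul, card_eq, Nat.add_sub_cancel, neg_pow]
  ring

theorem cayleyMenger_sign_general [NormedAddCommGroup V] [InnerProductSpace ℝ V]
    [PseudoMetricSpace P] [NormedAddTorsor V P] [Nonempty ι] (p : ι → P) :
    (AffineIndependent ℝ p →
      0 < (-1 : ℝ) ^ Fintype.card ι * (onesBorder (sqDistMatrix p)).det) ∧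
    (¬ AffineIndependent ℝ p → (onesBorder (sqDistMatrix p)).det = 0) := by
  obtain ⟨i₀⟩ := ‹Nonempty ι›
  rw [affineIndependent_iff_linearIndependent_vsub ℝ p i₀, det_onesBorder_sqDistMatrix p i₀]
  constructor
  · intro indep
    have det_gram_pos := (posDef_gram_of_linearIndependent indep).det_pos
    rw [← mul_assoc, ← mul_assoc, ← mul_pow, neg_one_mul, neg_neg, one_pow, one_mul]
    positivity
  · intro dep
    rw [not_ne_iff.mp (mt det_gram_ne_zero_iff_linearIndependent.mp dep), mul_zero]

end SquaredDistances

theorem cayleyMengerMatrix_eq_onesBorder {m n : ℕ}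
    (p : Fin (m + 1) → EuclideanSpace ℝ (Fin n)) :
    cayleyMengerMatrix p = onesBorder (sqDistMatrix p) := by
  ext (_ | i) (_ | j) <;> simp [cayleyMengerMatrix, onesBorder, sqDistMatrix, dist_eq_norm]

theorem cayleyMenger_sign
    (n : ℕ) (p : Fin (n + 1) → EuclideanSpace ℝ (Fin n)) :
    (AffineIndependent ℝ p →
      0 < (-1 : ℝ) ^ (n + 1) * (cayleyMengerMatrix p).det) ∧
    (¬ AffineIndependent ℝ p → (cayleyMengerMatrix p).det = 0) := by
  simpa only [cayleyMengerMatrix_eq_onesBorder, Fintype.card_fin] using cayleyMenger_sign_general p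
end

section
/- Let n ≥ 1 and let ρ : Fin (n+1) → Fin (n+1) → ℝ be the distance function of a metric space on n+1 points p_0, …, p_n, i.e. ρ is symmetric, ρ(i,i) = 0, ρ(i,j) > 0 for i ≠ j, and ρ satisfies the triangle inequality ρ(i,k) ≤ ρ(i,j) + ρ(j,k). Suppose that for each k = 1, …, n the Cayley–Menger determinant of p_0, …, p_k (the determinant of the (k+2) × (k+2) matrix formed from the distances ρ(i,j) for 0 ≤ i, j ≤ k) has sign (−1)^(k+1). Then there exist points q_0, …, q_n in Euclidean space ℝ^n with ‖q_i − q_j‖ = ρ(i,j) for all i, j, and the points q_0, …, q_n are affinely independent. -/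
/-- The Cayley–Menger matrix of an abstract distance function `ρ` on `m + 1`
points: entries are squared distances, bordered by a row and column of ones
with a zero in the corner. -/
def cayleyMengerMatrixOfDist {m : ℕ} (ρ : Fin (m + 1) → Fin (m + 1) → ℝ) :
    Matrix (Option (Fin (m + 1))) (Option (Fin (m + 1))) ℝ :=
  fun i j =>
    match i, j with
    | some i, some j => ρ i j ^ 2
    | some _, none => 1
    | none, some _ => 1
    | none, none => 0

/-! If `p₀, …, pₘ` realize `ρ` in Euclidean space, polarization expresses the Gram matrix of the
vectors `pᵢ - p₀` through `ρ` alone. For an abstract `ρ` the Schur complement of the Cayley–Menger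
matrix with respect to its block on the border and `p₀` is `-2` times this would-be Gram matrix `G`,
so the sign conditions on the Cayley–Menger determinants say exactly that the leading principal
minors of `G` are positive. By Sylvester's criterion `G` is positive definite, hence the Gram matrix
of linearly independent vectors; together with the origin these are the points sought. -/

section SylvesterCriterion

open Matrix
open scoped ComplexOrder

variable {𝕜 : Type*} [RCLike 𝕜]

theorem posDef_fromBlocks_of_det_pos {m ι : Type*} [Fintype m] [DecidableEq m] [Unique ι]
    [Fintype ι] [DecidableEq ι] {A : Matrix m m 𝕜} {B : Matrix m ι 𝕜} {D : Matrix ι ι 𝕜}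
    (hA : A.PosDef) (hdet : 0 < (fromBlocks A B Bᴴ D).det) :
    (fromBlocks A B Bᴴ D).PosDef := by
  let _ : Invertible A := hA.isUnit.invertible
  set S := D - Bᴴ * A⁻¹ * B
  have hSdet : 0 < S.det := by
    rw [det_fromBlocks₁₁, invOf_eq_nonsing_inv] at hdet
    exact pos_of_mul_pos_right hdet hA.det_pos.le
  have hS : S.PosSemidef := by
    have hS_diagonal : S = diagonal fun _ => S.det := by
      ext i j
      simp [Unique.eq_default i, Unique.eq_default j]
    rw [hS_diagonal]
    exact .diagonal fun _ => hSdet.le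
  exact ((PosDef.fromBlocks₁₁ B D hA).mpr hS).posDef_iff_det_ne_zero.mpr hdet.ne'

theorem posDef_of_posDef_castSucc_of_det_pos {n : ℕ} {A : Matrix (Fin (n + 1)) (Fin (n + 1)) 𝕜}
    (hA : A.IsHermitian) (hminor : (A.submatrix Fin.castSucc Fin.castSucc).PosDef)
    (hdet : 0 < A.det) : A.PosDef := by
  let e : Fin n ⊕ Fin 1 ≃ Fin (n + 1) := finSumFinEquiv
  let B := (A.submatrix e e).toBlocks₁₂
  let D := (A.submatrix e e).toBlocks₂₂
  have hblocks : A.submatrix e e =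
      fromBlocks (A.submatrix Fin.castSucc Fin.castSucc) B Bᴴ D := by
    rw [← fromBlocks_toBlocks (A.submatrix e e)]
    congr 1
    ext i j
    exact ((hA.submatrix e).apply _ _).symm
  have hpos : (A.submatrix e e).PosDef := by
    rw [← det_submatrix_equiv_self e, hblocks] at hdet
    exact hblocks ▸ posDef_fromBlocks_of_det_pos hminor hdet
  simpa using hpos.submatrix e.symm.injective

theorem posDef_of_leading_minors_pos {n : ℕ} {A : Matrix (Fin n) (Fin n) 𝕜} (hA : A.IsHermitian)
    (hminors : ∀ (k : ℕ) (hk : k ≤ n), 0 < (A.submatrix (Fin.castLE hk) (Fin.castLE hk)).det) :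
    A.PosDef := by
  induction n with
  | zero => simpa [Subsingleton.elim A 1] using PosDef.one
  | succ n ih =>
    refine posDef_of_posDef_castSucc_of_det_pos hA (ih (hA.submatrix _) fun k hk => ?_) ?_
    · exact hminors k (hk.trans n.le_succ)
    · simpa using hminors (n + 1) le_rfl

end SylvesterCriterion

open Matrix in
open scoped ComplexOrder MatrixOrder in
theorem exists_gram_eq_of_posSemidef {𝕜 ι : Type*} [RCLike 𝕜] [Fintype ι] {A : Matrix ι ι 𝕜}
    (hA : A.PosSemidef) : ∃ v : ι → EuclideanSpace 𝕜 ι, gram 𝕜 v = A := by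
  classical
  obtain ⟨C, rfl⟩ := CStarAlgebra.nonneg_iff_eq_star_mul_self.mp hA.nonneg
  exact ⟨fun j => WithLp.toLp 2 (C.col j),
    gram_eq_conjTranspose_mul (EuclideanSpace.basisFun ι 𝕜) _⟩

theorem affineIndependent_cons_zero_iff {k V : Type*} [Ring k] [AddCommGroup V] [Module k V]
    {n : ℕ} {v : Fin n → V} :
    AffineIndependent k (Fin.cons 0 v : Fin (n + 1) → V) ↔ LinearIndependent k v := by
  rw [affineIndependent_iff_linearIndependent_vsub k _ 0,
    ← linearIndependent_equiv (finSuccAboveEquiv 0)]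
  congr! 1
  ext i
  simp [finSuccAboveEquiv_apply]

section CayleyMenger

variable {m : ℕ} {ρ : Fin (m + 1) → Fin (m + 1) → ℝ}

/-- The Gram matrix `⟪pᵢ - p₀, pⱼ - p₀⟫`, `1 ≤ i, j ≤ m`, of points with mutual distances `ρ`,
expressed through `ρ` by polarization so that it makes sense without any points; the row of `pᵢ`
has index `i - 1`. -/
noncomputable def distGram (ρ : Fin (m + 1) → Fin (m + 1) → ℝ) : Matrix (Fin m) (Fin m) ℝ :=
  Matrix.of fun i j => (ρ 0 i.succ ^ 2 + ρ 0 j.succ ^ 2 - ρ i.succ j.succ ^ 2) / 2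

theorem isHermitian_distGram (hsymm : ∀ i j, ρ i j = ρ j i) : (distGram ρ).IsHermitian := by
  ext i j
  simp [distGram, hsymm i.succ j.succ, add_comm]

/-- The indexing of the rows of a Cayley–Menger matrix that puts the border and `p₀` first. -/
def cayleyMengerIndexEquiv (m : ℕ) : Fin 2 ⊕ Fin m ≃ Option (Fin (m + 1)) where
  toFun := Sum.elim ![none, some 0] fun j => some j.succ
  invFun i := i.elim (.inl 0) (Fin.cases (.inl 1) .inr)
  left_inv := by
    rintro (i | j)
    · fin_cases i <;> rfl
    · rfl
  right_inv := by
    rintro (_ | i)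
    · rfl
    · cases i using Fin.cases <;> rfl

theorem cayleyMengerMatrixOfDist_submatrix (hsymm : ∀ i j, ρ i j = ρ j i)
    (hdiag : ∀ i, ρ i i = 0) :
    (cayleyMengerMatrixOfDist ρ).submatrix (cayleyMengerIndexEquiv m) (cayleyMengerIndexEquiv m) =
      Matrix.fromBlocks !![0, 1; 1, 0] (Matrix.of ![1, fun j => ρ 0 j.succ ^ 2])
        (Matrix.of ![1, fun j => ρ 0 j.succ ^ 2]).transpose
        (Matrix.of fun i j => ρ i.succ j.succ ^ 2) := by
  ext i j
  rcases i with i | i <;> rcases j with j | j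
  · fin_cases i <;> fin_cases j <;>
      simp [cayleyMengerIndexEquiv, cayleyMengerMatrixOfDist, hdiag]
  · fin_cases i <;> simp [cayleyMengerIndexEquiv, cayleyMengerMatrixOfDist]
  · fin_cases j <;> simp [cayleyMengerIndexEquiv, cayleyMengerMatrixOfDist, hsymm i.succ 0]
  · simp [cayleyMengerIndexEquiv, cayleyMengerMatrixOfDist]

theorem det_cayleyMengerMatrixOfDist (hsymm : ∀ i j, ρ i j = ρ j i) (hdiag : ∀ i, ρ i i = 0) :
    (cayleyMengerMatrixOfDist ρ).det = (-1) ^ (m + 1) * (2 ^ m * (distGram ρ).det) := by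
  let P : Matrix (Fin 2) (Fin 2) ℝ := !![0, 1; 1, 0]
  let B : Matrix (Fin 2) (Fin m) ℝ := Matrix.of ![1, fun j => ρ 0 j.succ ^ 2]
  have hP : P * P = 1 := by simp [P, Matrix.one_fin_two]
  let _ : Invertible P := ⟨P, hP, hP⟩
  have hPdet : P.det = -1 := by simp [P]
  have hschur : (Matrix.of fun i j : Fin m => ρ i.succ j.succ ^ 2) - B.transpose * P * B =
      (-2 : ℝ) • distGram ρ := by
    ext i j
    simp [P, B, distGram, Matrix.mul_apply, Fin.sum_univ_two]
    ring
  calc (cayleyMengerMatrixOfDist ρ).det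
      = P.det * ((-2 : ℝ) • distGram ρ).det := by
        rw [← Matrix.det_submatrix_equiv_self (cayleyMengerIndexEquiv m),
          cayleyMengerMatrixOfDist_submatrix hsymm hdiag, ← hschur]
        exact Matrix.det_fromBlocks₁₁ P B _ _
    _ = (-1) ^ (m + 1) * (2 ^ m * (distGram ρ).det) := by
        rw [hPdet, Matrix.det_smul, Fintype.card_fin, neg_pow]
        ring

theorem neg_one_pow_mul_det_cayleyMengerMatrixOfDist_pos_iff (hsymm : ∀ i j, ρ i j = ρ j i)
    (hdiag : ∀ i, ρ i i = 0) :
    0 < (-1) ^ (m + 1) * (cayleyMengerMatrixOfDist ρ).det ↔ 0 < (distGram ρ).det := by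
  rw [det_cayleyMengerMatrixOfDist hsymm hdiag, ← mul_assoc, ← mul_pow, neg_one_mul, neg_neg,
    one_pow, one_mul, mul_pos_iff_of_pos_left (by positivity)]

theorem posDef_distGram_of_cayleyMenger (hsymm : ∀ i j, ρ i j = ρ j i) (hdiag : ∀ i, ρ i i = 0)
    (hCM : ∀ (k : ℕ) (_ : 1 ≤ k) (hk : k ≤ m),
      0 < (-1 : ℝ) ^ (k + 1) *
        (cayleyMengerMatrixOfDist (fun i j : Fin (k + 1) =>
          ρ (Fin.castLE (Nat.succ_le_succ hk) i) (Fin.castLE (Nat.succ_le_succ hk) j))).det) :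
    (distGram ρ).PosDef := by
  refine posDef_of_leading_minors_pos (isHermitian_distGram hsymm) fun k hk => ?_
  rcases k.eq_zero_or_pos with rfl | hk_pos
  · simp
  · exact (neg_one_pow_mul_det_cayleyMengerMatrixOfDist_pos_iff
      (fun _ _ => hsymm _ _) (fun _ => hdiag _)).mp (hCM k hk_pos hk)

theorem norm_cons_zero_sub_eq_abs {E : Type*} [NormedAddCommGroup E] [InnerProductSpace ℝ E]
    (hsymm : ∀ i j, ρ i j = ρ j i) (hdiag : ∀ i, ρ i i = 0) {v : Fin m → E}
    (hv : Matrix.gram ℝ v = distGram ρ) (i j : Fin (m + 1)) :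
    ‖(Fin.cons 0 v : Fin (m + 1) → E) i - (Fin.cons 0 v : Fin (m + 1) → E) j‖ = |ρ i j| := by
  have hinner (i j : Fin m) : inner ℝ (v i) (v j) = distGram ρ i j := congr_fun₂ hv i j
  have hnorm (i : Fin m) : ‖v i‖ ^ 2 = ρ 0 i.succ ^ 2 := by
    rw [← real_inner_self_eq_norm_sq, hinner]
    simp [distGram, hdiag]
  rw [← sq_eq_sq₀ (norm_nonneg _) (abs_nonneg _), sq_abs]
  cases i using Fin.cases with
  | zero => cases j using Fin.cases <;> simp [hdiag, hnorm]
  | succ i =>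
    cases j using Fin.cases with
    | zero => simp [hnorm, hsymm i.succ 0]
    | succ j =>
      simp only [Fin.cons_succ, norm_sub_sq_real, hnorm, hinner, distGram, Matrix.of_apply]
      ring

end CayleyMenger

theorem menger_embedding_general
    (n : ℕ) (ρ : Fin (n + 1) → Fin (n + 1) → ℝ)
    (hsymm : ∀ i j, ρ i j = ρ j i)
    (hdiag : ∀ i, ρ i i = 0)
    (hCM : ∀ (k : ℕ) (_ : 1 ≤ k) (hk' : k ≤ n),
      0 < (-1 : ℝ) ^ (k + 1) *
        (cayleyMengerMatrixOfDist (fun i j : Fin (k + 1) =>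
          ρ (Fin.castLE (Nat.succ_le_succ hk') i)
            (Fin.castLE (Nat.succ_le_succ hk') j))).det) :
    ∃ q : Fin (n + 1) → EuclideanSpace ℝ (Fin n),
      (∀ i j, ‖q i - q j‖ = |ρ i j|) ∧ AffineIndependent ℝ q := by
  have hG : (distGram ρ).PosDef := posDef_distGram_of_cayleyMenger hsymm hdiag hCM
  obtain ⟨v, hv⟩ := exists_gram_eq_of_posSemidef hG.posSemidef
  have hv_indep : LinearIndependent ℝ v := Matrix.linearIndependent_of_posDef_gram (hv ▸ hG)
  exact ⟨Fin.cons 0 v, norm_cons_zero_sub_eq_abs hsymm hdiag hv,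
    affineIndependent_cons_zero_iff.mpr hv_indep⟩

theorem menger_embedding
    (n : ℕ) (hn : 1 ≤ n) (ρ : Fin (n + 1) → Fin (n + 1) → ℝ)
    (hsymm : ∀ i j, ρ i j = ρ j i)
    (hdiag : ∀ i, ρ i i = 0)
    (hpos : ∀ i j, i ≠ j → 0 < ρ i j)
    (htri : ∀ i j k, ρ i k ≤ ρ i j + ρ j k)
    (hCM : ∀ (k : ℕ) (hk : 1 ≤ k) (hk' : k ≤ n),
      0 < (-1 : ℝ) ^ (k + 1) *
        (cayleyMengerMatrixOfDist (fun i j : Fin (k + 1) =>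
          ρ (Fin.castLE (Nat.succ_le_succ hk') i)
            (Fin.castLE (Nat.succ_le_succ hk') j))).det) :
    ∃ q : Fin (n + 1) → EuclideanSpace ℝ (Fin n),
      (∀ i j, ‖q i - q j‖ = ρ i j) ∧ AffineIndependent ℝ q := by
  have hnonneg (i j) : 0 ≤ ρ i j := by grind [hdiag i, hpos i j]
  simpa only [abs_of_nonneg (hnonneg _ _)] using menger_embedding_general n ρ hsymm hdiag hCM
end

section
/- Let n ≥ 1 and let p_1, …, p_{n+2} be distinct points of Euclidean space ℝ^n. Then the ratio of the maximum to the minimum of the pairwise distances satisfies max_{i ≠ j} ‖p_i − p_j‖ > (1 + 1/(n+2)) · min_{i ≠ j} ‖p_i − p_j‖. -/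
/-!
Affinely dependent points `p i` have weights `c ≠ 0` with `∑ c i = 0` and `∑ c i • p i = 0`.
Expanding the square of the latter gives `∑ c i * c j * dist (p i) (p j) ^ 2 = 0`. Off the
diagonal the squared distances lie within `(M² - m²) / 2` of the midpoint `(M² + m²) / 2` of
`[m², M²]`, whereas `∑_{i ≠ j} c i * c j = -∑ c i ^ 2`. Balancing the two by Cauchy-Schwarz gives
`N * m² ≤ (N - 2) * M²` for `N` points.
-/

open Finset

section QuadraticForm

variable {𝕜 : Type*} [Field 𝕜] [LinearOrder 𝕜] [IsStrictOrderedRing 𝕜]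

theorem mul_le_midpoint_mul_add_radius_mul_abs {a b x : 𝕜} (hx : x ∈ Set.Icc a b) (t : 𝕜) :
    t * x ≤ (b + a) / 2 * t + (b - a) / 2 * |t| := by
  obtain ⟨hax, hxb⟩ := hx
  have hdev : |x - (b + a) / 2| ≤ (b - a) / 2 := abs_le.2 ⟨by linarith, by linarith⟩
  calc t * x = (b + a) / 2 * t + (x - (b + a) / 2) * t := by ring
    _ ≤ (b + a) / 2 * t + |x - (b + a) / 2| * |t| := by
      rw [← abs_mul]; gcongr; exact le_abs_self _
    _ ≤ (b + a) / 2 * t + (b - a) / 2 * |t| := by gcongr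

theorem nontrivial_of_sum_eq_zero {ι M : Type*} [Fintype ι] [AddCommMonoid M] {c : ι → M}
    (hc : c ≠ 0) (hsum : ∑ i, c i = 0) : Nontrivial ι := by
  obtain ⟨k, hk⟩ := Function.ne_iff.1 hc
  by_contra h
  have := not_nontrivial_iff_subsingleton.1 h
  exact hk ((Fintype.sum_subsingleton c k).symm.trans hsum)

variable {ι : Type*} [Fintype ι] {D : ι → ι → 𝕜} {c : ι → 𝕜} {a b : 𝕜}

theorem sum_mul_mul_le_of_mem_Icc (hdiag : ∀ i, D i i ≤ 0)
    (hoff : ∀ i j, i ≠ j → D i j ∈ Set.Icc a b) (hsum : ∑ i, c i = 0) :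
    ∑ i, ∑ j, c i * c j * D i j ≤
      (b - a) / 2 * (∑ i, |c i|) ^ 2 - b * ∑ i, c i ^ 2 := by
  classical
  -- On the diagonal midpoint and radius add up to `b`, which the last term cancels.
  have hterm (i j : ι) : c i * c j * D i j ≤
      (b + a) / 2 * (c i * c j) + (b - a) / 2 * (|c i| * |c j|) -
        if i = j then b * c i ^ 2 else 0 := by
    split_ifs with hij
    · subst hij
      calc c i * c i * D i i ≤ 0 := mul_nonpos_of_nonneg_of_nonpos (mul_self_nonneg _) (hdiag i)
        _ = _ := by rw [abs_mul_abs_self]; ring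
    · rw [sub_zero, ← abs_mul]
      exact mul_le_midpoint_mul_add_radius_mul_abs (hoff i j hij) _
  calc ∑ i, ∑ j, c i * c j * D i j
      ≤ ∑ i, ∑ j, ((b + a) / 2 * (c i * c j) + (b - a) / 2 * (|c i| * |c j|) -
          if i = j then b * c i ^ 2 else 0) :=
        sum_le_sum fun i _ => sum_le_sum fun j _ => hterm i j
    _ = (b + a) / 2 * (∑ i, c i) ^ 2 + (b - a) / 2 * (∑ i, |c i|) ^ 2 - b * ∑ i, c i ^ 2 := by
        simp only [sum_sub_distrib, sum_add_distrib, ← mul_sum, ← sum_mul, sum_ite_eq, mem_univ,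
          if_true, sq]
    _ = (b - a) / 2 * (∑ i, |c i|) ^ 2 - b * ∑ i, c i ^ 2 := by rw [hsum]; ring

theorem card_mul_le_of_sum_mul_mul_nonneg (hdiag : ∀ i, D i i ≤ 0)
    (hoff : ∀ i j, i ≠ j → D i j ∈ Set.Icc a b) (hc : c ≠ 0) (hsum : ∑ i, c i = 0)
    (hform : 0 ≤ ∑ i, ∑ j, c i * c j * D i j) :
    Fintype.card ι * a ≤ (Fintype.card ι - 2) * b := by
  have hab : a ≤ b := by
    have := nontrivial_of_sum_eq_zero hc hsum
    obtain ⟨i, j, hij⟩ := exists_pair_ne ι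
    exact (hoff i j hij).1.trans (hoff i j hij).2
  have hpos : 0 < ∑ i, c i ^ 2 := by
    obtain ⟨k, hk⟩ := Function.ne_iff.1 hc
    exact sum_pos' (fun i _ => sq_nonneg (c i)) ⟨k, mem_univ k, sq_pos_of_ne_zero hk⟩
  have hcauchy : (∑ i, |c i|) ^ 2 ≤ Fintype.card ι * ∑ i, c i ^ 2 := by
    simpa only [sq_abs, card_univ] using sq_sum_le_card_mul_sum_sq (s := univ) (f := fun i => |c i|)
  have hbound : 0 ≤ ((b - a) / 2 * Fintype.card ι - b) * ∑ i, c i ^ 2 :=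
    calc 0 ≤ (b - a) / 2 * (∑ i, |c i|) ^ 2 - b * ∑ i, c i ^ 2 :=
          hform.trans (sum_mul_mul_le_of_mem_Icc hdiag hoff hsum)
      _ ≤ (b - a) / 2 * (Fintype.card ι * ∑ i, c i ^ 2) - b * ∑ i, c i ^ 2 := by
          gcongr
      _ = _ := by ring
  linarith [nonneg_of_mul_nonneg_left hbound hpos]

theorem one_add_one_div_mul_lt_of_mul_sq_le {x m M : 𝕜} (hx : 0 < x) (hM : 0 < M)
    (h : x * m ^ 2 ≤ (x - 2) * M ^ 2) : (1 + 1 / x) * m < M := by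
  refine lt_of_pow_lt_pow_left₀ 2 hM.le (lt_of_mul_lt_mul_left ?_ (pow_pos hx 3).le)
  calc x ^ 3 * ((1 + 1 / x) * m) ^ 2 = (x + 1) ^ 2 * (x * m ^ 2) := by field_simp
    _ ≤ (x + 1) ^ 2 * ((x - 2) * M ^ 2) := by gcongr
    _ = x ^ 3 * M ^ 2 - (3 * x + 2) * M ^ 2 := by ring
    _ < x ^ 3 * M ^ 2 := sub_lt_self _ (by positivity)

end QuadraticForm

theorem dist_mem_Icc_sInf_sSup {ι X : Type*} [Finite ι] [PseudoMetricSpace X] (p : ι → X)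
    {i j : ι} (hij : i ≠ j) :
    dist (p i) (p j) ∈ Set.Icc (sInf {d | ∃ i j, i ≠ j ∧ d = dist (p i) (p j)})
      (sSup {d | ∃ i j, i ≠ j ∧ d = dist (p i) (p j)}) := by
  have hfinite : {d | ∃ i j, i ≠ j ∧ d = dist (p i) (p j)}.Finite := by
    refine (Set.finite_range fun q : ι × ι => dist (p q.1) (p q.2)).subset ?_
    rintro _ ⟨i, j, -, rfl⟩
    exact ⟨(i, j), rfl⟩
  exact ⟨csInf_le hfinite.bddBelow ⟨i, j, hij, rfl⟩, le_csSup hfinite.bddAbove ⟨i, j, hij, rfl⟩⟩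

section AffineDependence

variable {ι V P : Type*} [Fintype ι] [NormedAddCommGroup V] [InnerProductSpace ℝ V]
  [MetricSpace P] [NormedAddTorsor V P] {p : ι → P}

theorem exists_sum_mul_mul_dist_sq_eq_zero (hp : ¬AffineIndependent ℝ p) :
    ∃ c : ι → ℝ, c ≠ 0 ∧ ∑ i, c i = 0 ∧ ∑ i, ∑ j, c i * c j * dist (p i) (p j) ^ 2 = 0 := by
  rw [affineIndependent_iff_of_fintype] at hp
  push Not at hp
  obtain ⟨c, hsum, hvsub, k, hk⟩ := hp
  refine ⟨c, fun h => hk (congrFun h k), hsum, ?_⟩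
  have hinner := EuclideanGeometry.inner_weightedVSub p hsum p hsum
  rw [hvsub, inner_zero_left] at hinner
  simp only [sq]
  linarith

theorem card_mul_sq_le_of_dist_mem_Icc (hp : ¬AffineIndependent ℝ p) {m M : ℝ} (hm : 0 ≤ m)
    (hdist : ∀ i j, i ≠ j → dist (p i) (p j) ∈ Set.Icc m M) :
    Fintype.card ι * m ^ 2 ≤ (Fintype.card ι - 2) * M ^ 2 := by
  obtain ⟨c, hc, hsum, hform⟩ := exists_sum_mul_mul_dist_sq_eq_zero hp
  refine card_mul_le_of_sum_mul_mul_nonneg (D := fun i j => dist (p i) (p j) ^ 2)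
    (fun i => by simp) (fun i j hij => ?_) hc hsum hform.ge
  obtain ⟨hlower, hupper⟩ := hdist i j hij
  exact ⟨by gcongr, by gcongr⟩

theorem schutte_ratio_general (hp : ¬AffineIndependent ℝ p) (hne : ∃ i j, p i ≠ p j) :
    (1 + 1 / (Fintype.card ι : ℝ)) * sInf {d : ℝ | ∃ i j, i ≠ j ∧ d = dist (p i) (p j)} <
      sSup {d : ℝ | ∃ i j, i ≠ j ∧ d = dist (p i) (p j)} := by
  obtain ⟨i, j, hij⟩ := hne
  have hcard : (0 : ℝ) < Fintype.card ι := Nat.cast_pos.2 (Fintype.card_pos_iff.2 ⟨i⟩)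
  have hmin : 0 ≤ sInf {d : ℝ | ∃ i j, i ≠ j ∧ d = dist (p i) (p j)} := by
    apply Real.sInf_nonneg
    rintro _ ⟨i, j, -, rfl⟩
    exact dist_nonneg
  have hmax : 0 < sSup {d : ℝ | ∃ i j, i ≠ j ∧ d = dist (p i) (p j)} :=
    (dist_pos.2 hij).trans_le (dist_mem_Icc_sInf_sSup p (ne_of_apply_ne p hij)).2
  exact one_add_one_div_mul_lt_of_mul_sq_le hcard hmax
    (card_mul_sq_le_of_dist_mem_Icc hp hmin fun _ _ => dist_mem_Icc_sInf_sSup p)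

end AffineDependence

theorem schutte_ratio
    (n : ℕ) (hn : 1 ≤ n) (p : Fin (n + 2) → EuclideanSpace ℝ (Fin n))
    (hdist : Function.Injective p) :
    (1 + 1 / (n + 2 : ℝ)) *
      sInf {d : ℝ | ∃ i j, i ≠ j ∧ d = ‖p i - p j‖} <
      sSup {d : ℝ | ∃ i j, i ≠ j ∧ d = ‖p i - p j‖} := by
  have hdep : ¬AffineIndependent ℝ p :=
    (finrank_vectorSpan_le_iff_not_affineIndependent ℝ p (Fintype.card_fin _)).1
      ((Submodule.finrank_le _).trans_eq finrank_euclideanSpace_fin)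
  simpa [dist_eq_norm] using schutte_ratio_general hdep ⟨0, 1, hdist.ne zero_ne_one⟩
end
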